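/- arXiv:1210.2491 — 2 statements merged into one kernel-verified Lean document; each statement's English description precedes it below -/
import Mathlib

section
/- Fix a, b > 0, ε > 0, r₂ > r₁ > 0 and c₁, c₂ > 0. There exists a constant c > 0, depending only on r₁, r₂, c₁, c₂, a, b, ε, such that for every n, every matrix A satisfying condition (A), every H satisfying conditions (H1)–(H2), every region Ω with U_n(r₁n^ε) ⊆ Ω ⊆ U_n(r₂n^ε), and all indices k ≠ l: |⟨θ_k·θ_l⟩_{F,Ω}| ≤ c·n^{−1+5ε}·⟨1⟩, |⟨θ_k·θ_l³⟩_{F,Ω}| ≤ c·n^{−1+7ε}·⟨1⟩, and |⟨θ_k²·θ_l²⟩_{F,Ω} − (1/4)·⟨1⟩_{F,Ω}| ≤ c·n^{−1+7ε}·⟨1⟩. -/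
/-!
Write `F(θ) = -θᵀAθ + H(θ)` and `W = ∫ e^{-θᵀAθ}`.

Let `v = A⁻¹ e_k`. The derivative of `θᵀAθ` in direction `v` is `2 θ_k`, and the bounds on `H` hold
on all of `ℝⁿ`, so integration by parts over the whole space has no boundary terms and gives
`2 ∫ θ_k P e^F = ∫ (P ∂_v H + ∂_v P) e^F` for every monomial `P` (`ibp`). Expanding
`A⁻¹ = I - X + X A⁻¹ X` shows that `A⁻¹` is entrywise within `(a + a²b)/n` of the identity
(`exists_col`). Hence `‖v‖₁` is bounded, `∂_v H = O((1 + ‖θ‖)³ / n)`, and `∂_v` acts as `∂_k` up to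
`O(1/n)`: with `k ≠ l` the integrals of `θ_k θ_l` and `θ_k θ_l³` are small, and that of
`θ_k² θ_l²` is half that of `θ_l²`, which is half that of `1`, up to small errors (`whole_space`).

To control the errors, `H ≤ c₁ θᵀAθ / n` dominates `e^F` by the Gaussian `e^{-s θᵀAθ}` with
`s = 1 - c₁/n`, whose mass is `s^{-n/2} W ≤ e^{c₁} W` when `n ≥ 2c₁`. Integration by parts for this
Gaussian bounds every even moment of a single coordinate (`moment_le`). Summing a sufficiently high
moment over the `n` coordinates shows that `‖θ‖` counts as `O(n^ε)` in the error terms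
(`norm_moment_le`) and that the integral outside the cube `U_n(r₁ n^ε)` is `O(W/n)` (`tail_le`), so
the whole-space estimates transfer to `Ω`. When `n < 2c₁` the region `Ω` lies in a fixed cube, `H` is
bounded above there, and every integral is trivially `O(W)` (`small_le`).
-/

open MeasureTheory Matrix Finset

/-- The ℓ^p norm on `Fin n → ℝ` (with `p = ⊤` the maximum norm). -/
noncomputable def lpnorm {n : ℕ} (p : ENNReal) (x : Fin n → ℝ) : ℝ :=
  if p = ⊤ then ⨆ j, |x j| else (∑ j, |x j| ^ p.toReal) ^ (1 / p.toReal)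

/-- The operator norm induced by the ℓ^p vector norm. -/
noncomputable def opNorm {n : ℕ} (p : ENNReal) (A : Matrix (Fin n) (Fin n) ℝ) : ℝ :=
  sSup {c : ℝ | ∃ x : Fin n → ℝ, x ≠ 0 ∧ c = lpnorm p (A.mulVec x) / lpnorm p x}

/-- Condition (A): `A = I + X` is symmetric positive definite, `X` has zero diagonal,
`|X_{jk}| ≤ a/n` for all `j,k`, and `‖A⁻¹‖₂ ≤ b`. -/
def CondA {n : ℕ} (a b : ℝ) (A : Matrix (Fin n) (Fin n) ℝ) : Prop :=
  A.IsSymm ∧ A.PosDef ∧ (∀ j, A j j = 1) ∧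
    (∀ j k, j ≠ k → |A j k| ≤ a / n) ∧ opNorm 2 A⁻¹ ≤ b

/-- The cube `U_n(ρ) = {θ ∈ ℝⁿ : |θ_j| ≤ ρ for all j}`. -/
def Uset (n : ℕ) (ρ : ℝ) : Set (Fin n → ℝ) := {θ | ∀ j, |θ j| ≤ ρ}

/-- Conditions (H1)–(H2): `H` is C¹ with `H(θ) ≤ c₁ θᵀAθ/n` and
`‖∇H(θ)‖_∞ ≤ c₂ (‖θ‖_∞³ + ‖θ‖_∞)/n`.  (The norm `‖θ‖` on `Fin n → ℝ` is the sup norm.) -/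
def CondH {n : ℕ} (c₁ c₂ : ℝ) (A : Matrix (Fin n) (Fin n) ℝ) (H : (Fin n → ℝ) → ℝ) : Prop :=
  ContDiff ℝ 1 H ∧
    (∀ θ, H θ ≤ c₁ * (θ ⬝ᵥ A.mulVec θ) / n) ∧
    (∀ θ (j : Fin n), |fderiv ℝ H θ (Pi.single j 1)| ≤ c₂ * (‖θ‖ ^ 3 + ‖θ‖) / n)

/-! ### Entrywise bounds on the inverse matrix -/

/-- The quadratic form `θᵀAθ`. -/
noncomputable def quad {n : ℕ} (A : Matrix (Fin n) (Fin n) ℝ) (θ : Fin n → ℝ) : ℝ :=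
  θ ⬝ᵥ A.mulVec θ

section MatrixBounds

variable {n : ℕ} {A : Matrix (Fin n) (Fin n) ℝ}

lemma lpnorm_two_eq (x : Fin n → ℝ) : lpnorm 2 x = ‖WithLp.toLp 2 x‖ := by
  rw [EuclideanSpace.norm_eq, lpnorm, if_neg (by simp), Real.sqrt_eq_rpow]
  simp

/-- The supremum defining `opNorm 2` runs over a bounded set, so it is a genuine operator bound. -/
lemma opNorm_two_spec (M : Matrix (Fin n) (Fin n) ℝ) (x : Fin n → ℝ) :
    ‖WithLp.toLp 2 (M.mulVec x)‖ ≤ opNorm 2 M * ‖WithLp.toLp 2 x‖ := by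
  by_cases hx : x = 0
  · simp [hx]
  have hpos : ∀ y : Fin n → ℝ, y ≠ 0 → 0 < ‖WithLp.toLp 2 y‖ := fun y hy => by
    rw [norm_pos_iff]; simpa using hy
  have hbd : BddAbove {c : ℝ | ∃ x : Fin n → ℝ, x ≠ 0 ∧
      c = lpnorm 2 (M.mulVec x) / lpnorm 2 x} := by
    refine ⟨‖Matrix.toEuclideanCLM (n := Fin n) (𝕜 := ℝ) M‖, ?_⟩
    rintro c ⟨y, hy, rfl⟩
    rw [lpnorm_two_eq, lpnorm_two_eq, div_le_iff₀ (hpos y hy), ← Matrix.toEuclideanCLM_toLp]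
    exact ContinuousLinearMap.le_opNorm _ _
  have h := le_csSup hbd ⟨x, hx, rfl⟩
  rw [lpnorm_two_eq, lpnorm_two_eq, div_le_iff₀ (hpos x hx)] at h
  exact h

/-- Since `A⁻¹ = I - X + X A⁻¹ X`, the inverse is entrywise within `(a + a²b)/n` of the identity.
The column `A⁻¹ e_k` is presented as a solution `v` of `A v = e_k`. -/
lemma exists_col {a b : ℝ} (ha : 0 < a) (hb : 0 < b) (hA : CondA a b A) (k : Fin n) :
    ∃ v : Fin n → ℝ, A.mulVec v = Pi.single k 1 ∧
      ∀ j, |v j - (Pi.single k 1 : Fin n → ℝ) j| ≤ (a + a ^ 2 * b) / n := by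
  obtain ⟨-, hpd, hdiag, hoff, hop⟩ := hA
  have hn : 0 < (n : ℝ) := by
    have := k.pos
    exact_mod_cast this
  have hdet : IsUnit A.det := (Matrix.isUnit_iff_isUnit_det A).1 hpd.isUnit
  have hX : ∀ i j, |(A - 1) i j| ≤ a / n := by
    intro i j
    by_cases h : i = j
    · subst h; simp [hdiag]; positivity
    · simpa [Matrix.one_apply_ne h] using hoff i j h
  set e : Fin n → ℝ := Pi.single k 1 with he
  set y : Fin n → ℝ := (A - 1).mulVec e with hy
  set u : Fin n → ℝ := A⁻¹.mulVec y with hu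
  have hAu : A.mulVec u = y := by
    rw [hu, Matrix.mulVec_mulVec, Matrix.mul_nonsing_inv A hdet, Matrix.one_mulVec]
  have hyj : ∀ j, |y j| ≤ a / n := by
    intro j
    have : y j = (A - 1) j k := by simp [hy, he]
    rw [this]; exact hX j k
  have hynorm : ‖WithLp.toLp 2 y‖ ≤ a / Real.sqrt n := by
    rw [EuclideanSpace.norm_eq]
    refine Real.sqrt_le_iff.2 ⟨by positivity, ?_⟩
    calc ∑ i, ‖(WithLp.toLp 2 y) i‖ ^ 2 ≤ ∑ _i : Fin n, (a / n) ^ 2 := by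
          refine Finset.sum_le_sum fun i _ => ?_
          exact pow_le_pow_left₀ (norm_nonneg _) (hyj i) 2
      _ = (a / Real.sqrt n) ^ 2 := by
          rw [div_pow, div_pow, Real.sq_sqrt hn.le]
          simp
          field_simp
  have hunorm : ‖WithLp.toLp 2 u‖ ≤ b * (a / Real.sqrt n) :=
    (opNorm_two_spec _ _).trans (mul_le_mul hop hynorm (norm_nonneg _) hb.le)
  have husum : ∑ i, |u i| ≤ a * b := by
    have h1 : (∑ i, |u i|) ^ 2 ≤ n * ∑ i, |u i| ^ 2 := by
      simpa using sq_sum_le_card_mul_sum_sq (s := Finset.univ) (f := fun i => |u i|)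
    have h2 : ∑ i, |u i| ^ 2 = ‖WithLp.toLp 2 u‖ ^ 2 := by
      rw [EuclideanSpace.norm_sq_eq]; simp
    have h3 : ‖WithLp.toLp 2 u‖ ^ 2 ≤ (b * (a / Real.sqrt n)) ^ 2 :=
      pow_le_pow_left₀ (norm_nonneg _) hunorm 2
    have h4 : (b * (a / Real.sqrt n)) ^ 2 = (a * b) ^ 2 / n := by
      rw [mul_pow, div_pow, Real.sq_sqrt hn.le]; ring
    refine le_of_sq_le_sq ?_ (by positivity)
    calc (∑ i, |u i|) ^ 2 ≤ n * ((a * b) ^ 2 / n) := by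
          rw [← h4]
          exact h1.trans (mul_le_mul_of_nonneg_left (h2 ▸ h3) hn.le)
      _ = (a * b) ^ 2 := by field_simp
  have huj : ∀ j, |u j| ≤ (a + a ^ 2 * b) / n := by
    intro j
    have h1 : u j = y j - ((A - 1).mulVec u) j := by
      rw [Matrix.sub_mulVec, hAu]; simp
    have h2 : |((A - 1).mulVec u) j| ≤ a / n * (a * b) := by
      calc |((A - 1).mulVec u) j| = |∑ i, (A - 1) j i * u i| := rfl
        _ ≤ ∑ i, |(A - 1) j i * u i| := Finset.abs_sum_le_sum_abs _ _
        _ ≤ ∑ i, a / n * |u i| := by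
            refine Finset.sum_le_sum fun i _ => ?_
            rw [abs_mul]
            exact mul_le_mul_of_nonneg_right (hX j i) (abs_nonneg _)
        _ ≤ a / n * (a * b) := by
            rw [← Finset.mul_sum]
            exact mul_le_mul_of_nonneg_left husum (by positivity)
    calc |u j| ≤ |y j| + |((A - 1).mulVec u) j| := by rw [h1]; exact abs_sub _ _
      _ ≤ a / n + a / n * (a * b) := add_le_add (hyj j) h2
      _ = (a + a ^ 2 * b) / n := by ring
  refine ⟨e - u, ?_, fun j => ?_⟩
  · rw [Matrix.mulVec_sub, hAu, hy, Matrix.sub_mulVec]; simp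
  · simpa using huj j

/-- `|θᵀAθ| ≤ n²(1+a)‖θ‖²` in the sup norm. -/
lemma quad_le {a b : ℝ} (ha : 0 < a) (hA : CondA a b A) (θ : Fin n → ℝ) :
    quad A θ ≤ n ^ 2 * (1 + a) * ‖θ‖ ^ 2 := by
  obtain ⟨-, -, hdiag, hoff, -⟩ := hA
  have hent : ∀ i j, |A i j| ≤ 1 + a := by
    intro i j
    by_cases h : i = j
    · subst h; rw [hdiag]; simp; exact ha.le
    · refine (hoff i j h).trans ?_
      have : (1 : ℝ) ≤ n := by exact_mod_cast i.pos
      have := div_le_self ha.le this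
      linarith
  calc quad A θ = ∑ i, ∑ j, θ i * (A i j * θ j) := by
        simp [quad, dotProduct, Matrix.mulVec, Finset.mul_sum]
    _ ≤ ∑ _i : Fin n, ∑ _j : Fin n, (1 + a) * ‖θ‖ ^ 2 := by
        refine Finset.sum_le_sum fun i _ => Finset.sum_le_sum fun j _ => ?_
        refine (le_abs_self _).trans ?_
        rw [abs_mul, abs_mul]
        have h1 : |θ i| ≤ ‖θ‖ := norm_le_pi_norm θ i
        have h2 : |θ j| ≤ ‖θ‖ := norm_le_pi_norm θ j
        calc |θ i| * (|A i j| * |θ j|) ≤ ‖θ‖ * ((1 + a) * ‖θ‖) := by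
              gcongr; exact hent i j
          _ = _ := by ring
    _ = _ := by simp; ring

lemma quad_pos (hpd : A.PosDef) {θ : Fin n → ℝ} (hθ : θ ≠ 0) : 0 < quad A θ := by
  simpa [quad] using hpd.dotProduct_mulVec_pos hθ

lemma quad_nonneg (hpd : A.PosDef) (θ : Fin n → ℝ) : 0 ≤ quad A θ := by
  by_cases h : θ = 0
  · simp [h, quad]
  · exact (quad_pos hpd h).le

lemma quad_smul (c : ℝ) (θ : Fin n → ℝ) : quad A (c • θ) = c ^ 2 * quad A θ := by
  simp [quad, Matrix.mulVec_smul]; ring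

lemma contDiff_quad : ContDiff ℝ 1 (quad A) := by
  have : quad A = fun θ => ∑ i, θ i * ∑ j, A i j * θ j := by
    ext θ; simp [quad, dotProduct, Matrix.mulVec]
  rw [this]; fun_prop

/-- Coercivity of a positive definite form; the constant may depend on `A`. -/
lemma exists_quad_ge (hpd : A.PosDef) : ∃ c > 0, ∀ θ, c * ‖θ‖ ^ 2 ≤ quad A θ := by
  by_cases hne : (Metric.sphere (0 : Fin n → ℝ) 1).Nonempty
  · obtain ⟨x, hx, hmin⟩ := (isCompact_sphere (0 : Fin n → ℝ) 1).exists_isMinOn hne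
      (contDiff_quad (A := A)).continuous.continuousOn
    have hx1 : ‖x‖ = 1 := by simpa using hx
    have hx0 : x ≠ 0 := by rintro rfl; simp at hx1
    refine ⟨quad A x, quad_pos hpd hx0, fun θ => ?_⟩
    by_cases h : θ = 0
    · simp [h, quad]
    have hn : 0 < ‖θ‖ := norm_pos_iff.2 h
    have h1 : quad A x ≤ quad A (‖θ‖⁻¹ • θ) := hmin (by simp [norm_smul, hn.ne'])
    rw [quad_smul] at h1
    calc quad A x * ‖θ‖ ^ 2 ≤ (‖θ‖⁻¹ ^ 2 * quad A θ) * ‖θ‖ ^ 2 := by gcongr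
      _ = quad A θ := by field_simp
  · refine ⟨1, one_pos, fun θ => ?_⟩
    by_cases h : θ = 0
    · simp [h, quad]
    exact absurd ⟨‖θ‖⁻¹ • θ, by simp [norm_smul, h]⟩ hne

/-- If `A v = e_k`, the derivative of `θᵀAθ` in direction `v` is `2 θ_k`. -/
lemma fderiv_quad (hs : A.IsSymm) {v : Fin n → ℝ} {k : Fin n} (hv : A.mulVec v = Pi.single k 1)
    (θ : Fin n → ℝ) : fderiv ℝ (quad A) θ v = 2 * θ k := by
  have hd : DifferentiableAt ℝ (quad A) θ := (contDiff_quad (A := A)).differentiable (by simp) θ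
  rw [← hd.lineDeriv_eq_fderiv]
  have h1 : θ ⬝ᵥ A.mulVec v = θ k := by rw [hv]; simp
  have h2 : v ⬝ᵥ A.mulVec θ = θ k := by
    rw [Matrix.dotProduct_mulVec, ← Matrix.mulVec_transpose, hs.eq, dotProduct_comm, h1]
  have h3 : ∀ t : ℝ, quad A (θ + t • v) = quad A θ + t * (2 * θ k) + t ^ 2 * quad A v := by
    intro t
    simp only [quad, Matrix.mulVec_add, Matrix.mulVec_smul, add_dotProduct, dotProduct_add,
      smul_dotProduct, dotProduct_smul, h1, h2, smul_eq_mul]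
    ring
  rw [lineDeriv]
  simp_rw [h3]
  have : HasDerivAt (fun t : ℝ => quad A θ + t * (2 * θ k) + t ^ 2 * quad A v)
      (1 * (2 * θ k) + (2 * (0:ℝ) ^ 1 * 1) * quad A v) 0 := by
    have ha := ((hasDerivAt_id (0:ℝ)).mul_const (2 * θ k)).const_add (quad A θ)
    have hb := ((hasDerivAt_id (0:ℝ)).pow 2).mul_const (quad A v)
    exact (ha.add hb).congr_deriv (by simp)
  rw [this.deriv]; ring

end MatrixBounds

/-! ### Integrability and integration by parts -/

section Integrability

variable {n : ℕ} {A : Matrix (Fin n) (Fin n) ℝ}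

/-- Continuous functions on `ℝⁿ` of at most polynomial growth. -/
def PolyGrowth (f : (Fin n → ℝ) → ℝ) : Prop :=
  Continuous f ∧ ∃ (C : ℝ) (p : ℕ), ∀ θ, |f θ| ≤ C * (1 + ‖θ‖) ^ p

lemma PolyGrowth.mul {f g : (Fin n → ℝ) → ℝ} (hf : PolyGrowth f) (hg : PolyGrowth g) :
    PolyGrowth fun θ => f θ * g θ := by
  obtain ⟨hfc, C, p, hC⟩ := hf
  obtain ⟨hgc, D, r, hD⟩ := hg
  refine ⟨hfc.mul hgc, C * D, p + r, fun θ => ?_⟩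
  calc |f θ * g θ| = |f θ| * |g θ| := abs_mul _ _
    _ ≤ (C * (1 + ‖θ‖) ^ p) * (D * (1 + ‖θ‖) ^ r) :=
        mul_le_mul (hC θ) (hD θ) (abs_nonneg _) ((abs_nonneg _).trans (hC θ))
    _ = _ := by ring

lemma PolyGrowth.const (c : ℝ) : PolyGrowth fun _ : Fin n → ℝ => c :=
  ⟨continuous_const, |c|, 0, fun θ => by simp⟩

lemma PolyGrowth.coord (k : Fin n) : PolyGrowth fun θ : Fin n → ℝ => θ k := by
  refine ⟨by fun_prop, 1, 1, fun θ => ?_⟩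
  have : |θ k| ≤ ‖θ‖ := norm_le_pi_norm θ k
  linarith

lemma PolyGrowth.coord_pow (k : Fin n) (i : ℕ) : PolyGrowth fun θ : Fin n → ℝ => θ k ^ i := by
  induction i with
  | zero => simpa using PolyGrowth.const 1
  | succ i ih => simpa [pow_succ] using ih.mul (PolyGrowth.coord k)

lemma PolyGrowth.mono (k l : Fin n) (i j : ℕ) :
    PolyGrowth fun θ : Fin n → ℝ => θ k ^ i * θ l ^ j :=
  (PolyGrowth.coord_pow k i).mul (PolyGrowth.coord_pow l j)

lemma PolyGrowth.norm_pow (p : ℕ) : PolyGrowth fun θ : Fin n → ℝ => (1 + ‖θ‖) ^ p :=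
  ⟨by fun_prop, 1, p, fun θ => by rw [abs_of_nonneg (by positivity), one_mul]⟩

lemma exists_pow_mul_exp_le (r : ℝ) (hr : 0 < r) (N : ℕ) :
    ∃ K : ℝ, ∀ x : ℝ, 0 ≤ x → (1 + x) ^ N * Real.exp (-(r * x ^ 2)) ≤ K := by
  refine ⟨N.factorial * Real.exp (2 * r) / r ^ N, fun x hx => ?_⟩
  have h1 : (1 + x) ^ N ≤ (2 + x ^ 2) ^ N :=
    pow_le_pow_left₀ (by positivity) (by nlinarith [sq_nonneg (x - 1)]) N
  have h2 := Real.pow_div_factorial_le_exp (r * (2 + x ^ 2)) (by positivity) N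
  rw [div_le_iff₀ (by positivity), mul_pow] at h2
  have h3 : Real.exp (r * (2 + x ^ 2)) = Real.exp (2 * r) * Real.exp (r * x ^ 2) := by
    rw [← Real.exp_add]; ring_nf
  rw [Real.exp_neg, ← div_eq_mul_inv, div_le_div_iff₀ (by positivity) (by positivity)]
  calc (1 + x) ^ N * r ^ N ≤ (2 + x ^ 2) ^ N * r ^ N := by gcongr
    _ = r ^ N * (2 + x ^ 2) ^ N := mul_comm _ _
    _ ≤ _ := h2
    _ = _ := by rw [h3]; ring

/-- The weight `e^{-θᵀAθ + H(θ)}`. -/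
noncomputable def wt (A : Matrix (Fin n) (Fin n) ℝ) (H : (Fin n → ℝ) → ℝ) (θ : Fin n → ℝ) : ℝ :=
  Real.exp (-quad A θ + H θ)

lemma wt_pos (H : (Fin n → ℝ) → ℝ) (θ : Fin n → ℝ) : 0 < wt A H θ := Real.exp_pos _

/-- An upper bound `H ≤ t θᵀAθ` with `t < 1` leaves Gaussian decay in `e^F`. -/
lemma integrable_mul_wt (hpd : A.PosDef) {H : (Fin n → ℝ) → ℝ} (hH : Continuous H) {t : ℝ}
    (ht : t < 1) (hHt : ∀ θ, H θ ≤ t * quad A θ) {f : (Fin n → ℝ) → ℝ} (hf : PolyGrowth f) :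
    Integrable fun θ => f θ * wt A H θ := by
  obtain ⟨hfc, C, p, hC⟩ := hf
  obtain ⟨c, hc, hq⟩ := exists_quad_ge hpd
  obtain ⟨K, hK⟩ := exists_pow_mul_exp_le ((1 - t) * c) (mul_pos (by linarith) hc) (p + (n + 1))
  have hqc : Continuous (quad A) := (contDiff_quad (A := A)).continuous
  have hC0 : 0 ≤ C := by
    have := (abs_nonneg _).trans (hC 0)
    simpa using this
  have hIntg : Integrable (fun θ : Fin n → ℝ => (1 + ‖θ‖) ^ (-((n : ℝ) + 1))) :=
    integrable_one_add_norm (by simp)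
  refine (hIntg.const_mul (C * K)).mono' ?_ (Filter.Eventually.of_forall fun θ => ?_)
  · unfold wt
    exact (by fun_prop : Continuous _).aestronglyMeasurable
  · have hle : wt A H θ ≤ Real.exp (-((1 - t) * c * ‖θ‖ ^ 2)) := by
      refine Real.exp_le_exp.2 ?_
      nlinarith [hHt θ, hq θ]
    have hK' := hK ‖θ‖ (norm_nonneg _)
    have hp : (0 : ℝ) < 1 + ‖θ‖ := by positivity
    have hpow : (1 + ‖θ‖) ^ (-((n : ℝ) + 1)) = ((1 + ‖θ‖) ^ (n + 1))⁻¹ := by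
      rw [Real.rpow_neg hp.le]; norm_cast
    rw [hpow, ← div_eq_mul_inv, le_div_iff₀ (by positivity), Real.norm_eq_abs, abs_mul,
      abs_of_pos (wt_pos H θ)]
    calc |f θ| * wt A H θ * (1 + ‖θ‖) ^ (n + 1)
        ≤ (C * (1 + ‖θ‖) ^ p) * Real.exp (-((1 - t) * c * ‖θ‖ ^ 2)) * (1 + ‖θ‖) ^ (n + 1) := by
          gcongr
          · exact (wt_pos H θ).le
          · exact hC θ
      _ = C * ((1 + ‖θ‖) ^ (p + (n + 1)) * Real.exp (-((1 - t) * c * ‖θ‖ ^ 2))) := by ring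
      _ ≤ C * K := by gcongr

/-- Integration by parts along `v = A⁻¹ e_k`: in that direction the Gaussian factor contributes
exactly `-2 θ_k`, so a factor `θ_k` in the integrand can be traded for derivatives. -/
lemma ibp (hs : A.IsSymm) (hpd : A.PosDef) {v : Fin n → ℝ} {k : Fin n}
    (hv : A.mulVec v = Pi.single k 1) {H : (Fin n → ℝ) → ℝ} (hH : ContDiff ℝ 1 H) {t : ℝ}
    (ht : t < 1) (hHt : ∀ θ, H θ ≤ t * quad A θ) (hDH : PolyGrowth fun θ => fderiv ℝ H θ v)
    (l : Fin n) (i j : ℕ) :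
    2 * ∫ θ, θ k * (θ k ^ i * θ l ^ j) * wt A H θ =
      (∫ θ, θ k ^ i * θ l ^ j * fderiv ℝ H θ v * wt A H θ) +
        (i * v k * (∫ θ, θ k ^ (i - 1) * θ l ^ j * wt A H θ) +
          j * v l * ∫ θ, θ k ^ i * θ l ^ (j - 1) * wt A H θ) := by
  set P : (Fin n → ℝ) → ℝ := fun θ => θ k ^ i * θ l ^ j with hP
  have hPd : Differentiable ℝ P := by rw [hP]; fun_prop
  have hIntg : ∀ {f : (Fin n → ℝ) → ℝ}, PolyGrowth f → Integrable fun θ => f θ * wt A H θ :=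
    fun hf => integrable_mul_wt hpd hH.continuous ht hHt hf
  have hqd : Differentiable ℝ (quad A) := (contDiff_quad (A := A)).differentiable (by simp)
  have hHd : Differentiable ℝ H := hH.differentiable (by simp)
  have hwd : Differentiable ℝ (wt A H) := by unfold wt; fun_prop
  have hfw : ∀ θ, fderiv ℝ (wt A H) θ v = (-(2 * θ k) + fderiv ℝ H θ v) * wt A H θ := by
    intro θ
    have h := ((hqd θ).hasFDerivAt.neg.add (hHd θ).hasFDerivAt).exp
    have h' : HasFDerivAt (wt A H) _ θ := h
    rw [h'.fderiv]
    simp [fderiv_quad hs hv, wt]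
    ring
  have hfP : ∀ θ, fderiv ℝ P θ v =
      i * v k * (θ k ^ (i - 1) * θ l ^ j) + j * v l * (θ k ^ i * θ l ^ (j - 1)) := by
    intro θ
    rw [← (hPd θ).lineDeriv_eq_fderiv, lineDeriv]
    have h1 : ∀ m : Fin n, HasDerivAt (fun t : ℝ => (θ + t • v) m) (v m) 0 := by
      intro m
      simpa using ((hasDerivAt_id (0 : ℝ)).mul_const (v m)).const_add (θ m)
    have h2 := ((h1 k).pow i).mul ((h1 l).pow j)
    have h3 : HasDerivAt (fun t : ℝ => P (θ + t • v)) _ 0 := h2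
    rw [h3.deriv]
    simp
    ring
  have hi1 := (hIntg (PolyGrowth.mono k l (i - 1) j)).const_mul (i * v k)
  have hi2 := (hIntg (PolyGrowth.mono k l i (j - 1))).const_mul (j * v l)
  have hi3 := hIntg ((PolyGrowth.mono k l i j).mul hDH)
  have hi4 := (hIntg ((PolyGrowth.coord k).mul (PolyGrowth.mono k l i j))).const_mul 2
  have key := integral_mul_fderiv_eq_neg_fderiv_mul_of_integrable (μ := volume) (v := v)
    (f := P) (g := wt A H) ?_ ?_ (hIntg (PolyGrowth.mono k l i j)) (fun x _ => hPd x)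
    (fun x _ => hwd x)
  · have e1 : (fun θ => P θ * fderiv ℝ (wt A H) θ v) = fun θ =>
        P θ * fderiv ℝ H θ v * wt A H θ - 2 * (θ k * P θ * wt A H θ) := by
      ext θ; rw [hfw]; ring
    have e2 : (fun θ => fderiv ℝ P θ v * wt A H θ) = fun θ =>
        i * v k * (θ k ^ (i - 1) * θ l ^ j * wt A H θ) +
          j * v l * (θ k ^ i * θ l ^ (j - 1) * wt A H θ) := by
      ext θ; rw [hfP]; ring
    rw [e1, e2, integral_sub hi3 hi4, integral_add hi1 hi2, integral_const_mul,
      integral_const_mul, integral_const_mul] at key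
    linarith
  · refine (hi1.add hi2).congr (Filter.Eventually.of_forall fun θ => ?_)
    simp only [Pi.add_apply]
    rw [hfP]; ring
  · refine (hi3.sub hi4).congr (Filter.Eventually.of_forall fun θ => ?_)
    simp only [Pi.sub_apply]
    rw [hfw]; ring

end Integrability

/-! ### Gaussian moments and tails -/

section Moments

variable {n : ℕ} {A : Matrix (Fin n) (Fin n) ℝ}

/-- The pure Gaussian weight `e^{-s θᵀAθ}`, encoded as `wt` with `H = (1 - s) θᵀAθ` so that
integration by parts applies to it as well. -/
noncomputable def gwt (A : Matrix (Fin n) (Fin n) ℝ) (s : ℝ) : (Fin n → ℝ) → ℝ :=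
  wt A fun θ => (1 - s) * quad A θ

lemma gwt_eq (s : ℝ) (θ : Fin n → ℝ) : gwt A s θ = Real.exp (-(s * quad A θ)) := by
  unfold gwt wt; ring_nf

lemma gwt_pos (s : ℝ) (θ : Fin n → ℝ) : 0 < gwt A s θ := wt_pos _ _

lemma integrable_mul_gwt (hpd : A.PosDef) {s : ℝ} (hs : 0 < s) {f : (Fin n → ℝ) → ℝ}
    (hf : PolyGrowth f) : Integrable fun θ => f θ * gwt A s θ :=
  integrable_mul_wt hpd (continuous_const.mul (contDiff_quad (A := A)).continuous)
    (by linarith : 1 - s < 1) (fun _ => le_rfl) hf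

lemma integrable_gwt (hpd : A.PosDef) {s : ℝ} (hs : 0 < s) : Integrable (gwt A s) := by
  simpa using integrable_mul_gwt hpd hs (PolyGrowth.const 1)

lemma integral_gwt_nonneg (s : ℝ) : 0 ≤ ∫ θ, gwt A s θ :=
  integral_nonneg fun θ => (gwt_pos s θ).le

/-- The constant `(2m-1)!! Bᵐ` bounding the moments of order `2m`. -/
noncomputable def mom (B : ℝ) (m : ℕ) : ℝ := ∏ i ∈ Finset.range m, ((2 * i + 1) * B)

lemma mom_nonneg {B : ℝ} (hB : 0 ≤ B) (m : ℕ) : 0 ≤ mom B m :=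
  Finset.prod_nonneg fun i _ => by positivity

lemma moment_le (hs : A.IsSymm) (hpd : A.PosDef) {s : ℝ} (hs2 : 1 / 2 ≤ s) {v : Fin n → ℝ}
    {j : Fin n} (hv : A.mulVec v = Pi.single j 1) {B : ℝ} (hB : 0 ≤ B) (hvB : v j ≤ B) (m : ℕ) :
    ∫ θ, θ j ^ (2 * m) * gwt A s θ ≤ mom B m * ∫ θ, gwt A s θ := by
  induction m with
  | zero => simp [mom]
  | succ m ih =>
    have hfd : ∀ θ, fderiv ℝ (fun θ => (1 - s) * quad A θ) θ v = (1 - s) * (2 * θ j) := by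
      intro θ
      have hd : DifferentiableAt ℝ (quad A) θ :=
        (contDiff_quad (A := A)).differentiable (by simp) θ
      rw [fderiv_const_mul hd]
      simp [fderiv_quad hs hv]
    have key := ibp hs hpd hv (H := fun θ => (1 - s) * quad A θ)
      (contDiff_const.mul contDiff_quad) (by linarith : 1 - s < 1) (fun _ => le_rfl)
      (by simp_rw [hfd]
          exact (PolyGrowth.const _).mul ((PolyGrowth.const _).mul (PolyGrowth.coord j)))
      j 0 (2 * m + 1)
    have e1 : ∀ θ : Fin n → ℝ, θ j * (θ j ^ 0 * θ j ^ (2 * m + 1)) *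
        wt A (fun θ => (1 - s) * quad A θ) θ = θ j ^ (2 * (m + 1)) * gwt A s θ := by
      intro θ; unfold gwt; ring
    have e2 : ∀ θ : Fin n → ℝ, θ j ^ 0 * θ j ^ (2 * m + 1) *
        fderiv ℝ (fun θ => (1 - s) * quad A θ) θ v *
        wt A (fun θ => (1 - s) * quad A θ) θ =
          (2 * (1 - s)) * (θ j ^ (2 * (m + 1)) * gwt A s θ) := by
      intro θ; rw [hfd]; unfold gwt; ring
    have e3 : ∀ θ : Fin n → ℝ, θ j ^ 0 * θ j ^ (2 * m + 1 - 1) *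
        wt A (fun θ => (1 - s) * quad A θ) θ = θ j ^ (2 * m) * gwt A s θ := by
      intro θ; unfold gwt; simp
    simp_rw [e1, e2, e3] at key
    rw [integral_const_mul] at key
    push_cast at key
    set M := ∫ θ, θ j ^ (2 * (m + 1)) * gwt A s θ with hM
    set M' := ∫ θ, θ j ^ (2 * m) * gwt A s θ with hM'
    have hM0 : 0 ≤ M := integral_nonneg fun θ => by
      have := gwt_pos (A := A) s θ
      have : 0 ≤ θ j ^ (2 * (m + 1)) := by rw [pow_mul]; positivity
      positivity
    have hM'0 : 0 ≤ M' := integral_nonneg fun θ => by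
      have := gwt_pos (A := A) s θ
      have : 0 ≤ θ j ^ (2 * m) := by rw [pow_mul]; positivity
      positivity
    have h1 : 2 * s * M = (2 * m + 1) * v j * M' := by linarith
    have h2 : M ≤ (2 * m + 1) * v j * M' := by nlinarith
    have h3 : (2 * m + 1) * v j * M' ≤ (2 * m + 1) * B * M' := by gcongr
    have h4 : (2 * m + 1) * B * M' ≤ (2 * m + 1) * B * (mom B m * ∫ θ, gwt A s θ) := by gcongr
    have h5 : mom B (m + 1) = mom B m * ((2 * m + 1) * B) := by
      simp [mom, Finset.prod_range_succ]
    rw [h5]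
    linarith

/-- Rescaling: `∫ e^{-s θᵀAθ} = s^{-n/2} ∫ e^{-θᵀAθ}`. -/
lemma integral_gwt_scale {s : ℝ} (hs : 0 < s) :
    ∫ θ, gwt A s θ = (Real.sqrt s ^ n)⁻¹ * ∫ θ, Real.exp (-quad A θ) := by
  have h := Measure.integral_comp_smul_of_nonneg (volume : Measure (Fin n → ℝ))
    (fun θ => Real.exp (-quad A θ)) (Real.sqrt s) (hR := Real.sqrt_nonneg s)
  simp only [quad_smul, Real.sq_sqrt hs.le, Module.finrank_fin_fun, smul_eq_mul] at h
  simp_rw [gwt_eq]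
  exact h

/-- Hypotheses on a Gaussian weight `e^{-s θᵀAθ}` that make its moments comparable with
`W = ∫ e^{-θᵀAθ}`: `B` bounds the diagonal of `A⁻¹` and `L` the total mass relative to `W`. -/
structure Tame (A : Matrix (Fin n) (Fin n) ℝ) (s B L : ℝ) : Prop where
  symm : A.IsSymm
  posDef : A.PosDef
  half_le : 1 / 2 ≤ s
  B_nonneg : 0 ≤ B
  L_nonneg : 0 ≤ L
  col : ∀ j, ∃ v : Fin n → ℝ, A.mulVec v = Pi.single j 1 ∧ v j ≤ B
  mass : ∫ θ, gwt A s θ ≤ L * ∫ θ, Real.exp (-quad A θ)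

lemma Tame.s_pos {s B L : ℝ} (h : Tame A s B L) : 0 < s := by linarith [h.half_le]

lemma integrable_sum_moment {s B L : ℝ} (h : Tame A s B L) (m : ℕ) :
    Integrable fun θ => (∑ j, θ j ^ (2 * m)) * gwt A s θ := by
  simp_rw [Finset.sum_mul]
  exact integrable_finsetSum _ fun j _ =>
    integrable_mul_gwt h.posDef h.s_pos (PolyGrowth.coord_pow j _)

lemma sum_moment_le {s B L : ℝ} (h : Tame A s B L) (m : ℕ) :
    ∫ θ, (∑ j, θ j ^ (2 * m)) * gwt A s θ ≤
      n * (mom B m * L * ∫ θ, Real.exp (-quad A θ)) := by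
  simp_rw [Finset.sum_mul]
  rw [integral_finsetSum _ fun j _ =>
    integrable_mul_gwt h.posDef h.s_pos (PolyGrowth.coord_pow j _)]
  calc ∑ j, ∫ θ, θ j ^ (2 * m) * gwt A s θ
      ≤ ∑ _j : Fin n, mom B m * L * ∫ θ, Real.exp (-quad A θ) := by
        refine Finset.sum_le_sum fun j _ => ?_
        obtain ⟨v, hv, hvB⟩ := h.col j
        refine (moment_le h.symm h.posDef h.half_le hv h.B_nonneg hvB m).trans ?_
        rw [mul_assoc]
        exact mul_le_mul_of_nonneg_left h.mass (mom_nonneg h.B_nonneg m)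
    _ = _ := by simp

lemma norm_pow_le_sum (hn : 0 < n) (θ : Fin n → ℝ) (m : ℕ) :
    ‖θ‖ ^ (2 * m) ≤ ∑ j, θ j ^ (2 * m) := by
  have : Nonempty (Fin n) := ⟨⟨0, hn⟩⟩
  obtain ⟨j, hj⟩ := Finite.exists_max fun j => ‖θ j‖
  have : ‖θ‖ ≤ |θ j| := (pi_norm_le_iff_of_nonneg (norm_nonneg _)).2 hj
  calc ‖θ‖ ^ (2 * m) ≤ |θ j| ^ (2 * m) := by gcongr
    _ = θ j ^ (2 * m) := by rw [pow_mul, sq_abs, ← pow_mul]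
    _ ≤ ∑ j, θ j ^ (2 * m) :=
      Finset.single_le_sum (f := fun j => θ j ^ (2 * m))
        (fun i _ => by rw [pow_mul]; positivity) (Finset.mem_univ j)

/-- Under the Gaussian weight the sup norm behaves as if it were `O(N)` as soon as some power of
`N` dominates `n`: a high even moment of `‖θ‖` costs only a factor `n`. -/
lemma norm_moment_le {s B L : ℝ} (h : Tame A s B L) (hn : 0 < n) {N : ℝ} (hN : 1 ≤ N) {m : ℕ}
    (hnN : (n : ℝ) ≤ N ^ (2 * m)) {p : ℕ} (hp6 : p ≤ 6) (hpm : p ≤ 2 * m) :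
    ∫ θ, (1 + ‖θ‖) ^ p * gwt A s θ ≤
      (2 ^ 6 * (1 + mom B m) * L) * N ^ p * ∫ θ, Real.exp (-quad A θ) := by
  have hN0 : 0 < N := by linarith
  have hW : 0 ≤ ∫ θ, Real.exp (-quad A θ) := integral_nonneg fun θ => (Real.exp_pos _).le
  have hmom := mom_nonneg h.B_nonneg m
  have hpt : ∀ θ : Fin n → ℝ, (1 + ‖θ‖) ^ p * gwt A s θ ≤
      (2 * N) ^ p * (gwt A s θ + (N ^ (2 * m))⁻¹ * ((∑ j, θ j ^ (2 * m)) * gwt A s θ)) := by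
    intro θ
    have hg := gwt_pos (A := A) s θ
    have h1 : (1 + ‖θ‖) ^ p ≤ (2 * N) ^ p * (1 + (N ^ (2 * m))⁻¹ * ∑ j, θ j ^ (2 * m)) := by
      have hsum := norm_pow_le_sum hn θ m
      have hsum0 : 0 ≤ ∑ j, θ j ^ (2 * m) := (by positivity : 0 ≤ ‖θ‖ ^ (2 * m)).trans hsum
      rcases le_or_gt ‖θ‖ N with hle | hgt
      · calc (1 + ‖θ‖) ^ p ≤ (2 * N) ^ p := by gcongr; linarith
          _ = (2 * N) ^ p * 1 := (mul_one _).symm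
          _ ≤ _ := by gcongr; have : 0 ≤ (N ^ (2 * m))⁻¹ * ∑ j, θ j ^ (2 * m) := by positivity
                      linarith
      · have h2 : 1 ≤ ‖θ‖ / N := by rw [one_le_div hN0]; exact hgt.le
        calc (1 + ‖θ‖) ^ p ≤ (2 * ‖θ‖) ^ p := by gcongr; linarith
          _ = (2 * N) ^ p * (‖θ‖ / N) ^ p := by rw [← mul_pow]; congr 1; field_simp
          _ ≤ (2 * N) ^ p * (‖θ‖ / N) ^ (2 * m) := by gcongr
          _ = (2 * N) ^ p * ((N ^ (2 * m))⁻¹ * ‖θ‖ ^ (2 * m)) := by rw [div_pow]; ring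
          _ ≤ (2 * N) ^ p * (1 + (N ^ (2 * m))⁻¹ * ∑ j, θ j ^ (2 * m)) := by
            gcongr
            have : (N ^ (2 * m))⁻¹ * ‖θ‖ ^ (2 * m) ≤ (N ^ (2 * m))⁻¹ * ∑ j, θ j ^ (2 * m) := by
              gcongr
            linarith
    calc (1 + ‖θ‖) ^ p * gwt A s θ
        ≤ ((2 * N) ^ p * (1 + (N ^ (2 * m))⁻¹ * ∑ j, θ j ^ (2 * m))) * gwt A s θ := by gcongr
      _ = _ := by ring
  have hi1 := integrable_gwt h.posDef h.s_pos
  have hi2 := (integrable_sum_moment h m).const_mul (N ^ (2 * m))⁻¹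
  calc ∫ θ, (1 + ‖θ‖) ^ p * gwt A s θ
      ≤ ∫ θ, (2 * N) ^ p * (gwt A s θ +
          (N ^ (2 * m))⁻¹ * ((∑ j, θ j ^ (2 * m)) * gwt A s θ)) :=
        integral_mono (integrable_mul_gwt h.posDef h.s_pos (PolyGrowth.norm_pow p))
          ((hi1.add hi2).const_mul _) hpt
    _ = (2 * N) ^ p * ((∫ θ, gwt A s θ) +
          (N ^ (2 * m))⁻¹ * ∫ θ, (∑ j, θ j ^ (2 * m)) * gwt A s θ) := by
        rw [integral_const_mul, integral_add hi1 hi2, integral_const_mul]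
    _ ≤ (2 * N) ^ p * (L * (∫ θ, Real.exp (-quad A θ)) +
          mom B m * L * ∫ θ, Real.exp (-quad A θ)) := by
        refine mul_le_mul_of_nonneg_left (add_le_add h.mass ?_) (by positivity)
        rw [inv_mul_le_iff₀ (by positivity)]
        refine (sum_moment_le h m).trans ?_
        have := h.L_nonneg
        gcongr
    _ = 2 ^ p * (N ^ p * ((1 + mom B m) * L * ∫ θ, Real.exp (-quad A θ))) := by
        rw [mul_pow]; ring
    _ ≤ 2 ^ 6 * (N ^ p * ((1 + mom B m) * L * ∫ θ, Real.exp (-quad A θ))) := by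
        have := h.L_nonneg
        gcongr
        norm_num
    _ = _ := by ring

/-- Outside a set containing the cube of side `r N` the integral of a function of growth
`(1 + ‖θ‖)⁴` is `O(1/n)`, again by a high moment. -/
lemma tail_le {s B L : ℝ} (h : Tame A s B L) (hn : 0 < n) {N r : ℝ} (hN : 1 ≤ N) (hr : 0 < r)
    {m : ℕ} (hnN : (n : ℝ) ^ 2 ≤ N ^ (2 * m)) {Ω : Set (Fin n → ℝ)} (hΩ : MeasurableSet Ω)
    (hsub : Uset n (r * N) ⊆ Ω) {H : (Fin n → ℝ) → ℝ} (hw : ∀ θ, wt A H θ ≤ gwt A s θ)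
    {f : (Fin n → ℝ) → ℝ} (hf : ∀ θ, |f θ| ≤ (1 + ‖θ‖) ^ 4)
    (hfi : Integrable fun θ => f θ * wt A H θ) :
    |(∫ θ in Ω, f θ * wt A H θ) - ∫ θ, f θ * wt A H θ| ≤
      ((1 + 1 / r) ^ 4 / r ^ (2 * m) * mom B (m + 2) * L) / n *
        ∫ θ, Real.exp (-quad A θ) := by
  have hN0 : 0 < N := by linarith
  have hn0 : (0 : ℝ) < n := by exact_mod_cast hn
  set G : ℝ := (1 + 1 / r) ^ 4 / (r * N) ^ (2 * m) with hG
  have hG0 : 0 ≤ G := by positivity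
  have hW : 0 ≤ ∫ θ, Real.exp (-quad A θ) := integral_nonneg fun θ => (Real.exp_pos _).le
  have hpt : ∀ θ ∈ Ωᶜ, ‖f θ * wt A H θ‖ ≤
      G * ((∑ j, θ j ^ (2 * (m + 2))) * gwt A s θ) := by
    intro θ hθ
    have hbig : r * N < ‖θ‖ := by
      by_contra hle
      exact hθ (hsub fun j => (norm_le_pi_norm θ j).trans (not_lt.1 hle))
    have hrN : 0 < r * N := by positivity
    have h1 : 1 + ‖θ‖ ≤ (1 + 1 / r) * ‖θ‖ := by
      have : 1 ≤ 1 / r * ‖θ‖ := by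
        rw [one_div, ← div_eq_inv_mul, one_le_div hr]; nlinarith
      linarith
    have h2 : (1 + ‖θ‖) ^ 4 ≤ G * ‖θ‖ ^ (2 * (m + 2)) := by
      have h3 : (r * N) ^ (2 * m) ≤ ‖θ‖ ^ (2 * m) := by gcongr
      rw [hG, div_mul_eq_mul_div, le_div_iff₀ (by positivity)]
      calc (1 + ‖θ‖) ^ 4 * (r * N) ^ (2 * m)
          ≤ ((1 + 1 / r) * ‖θ‖) ^ 4 * ‖θ‖ ^ (2 * m) := by gcongr
        _ = _ := by ring
    rw [norm_mul, Real.norm_eq_abs, Real.norm_eq_abs, abs_of_pos (wt_pos H θ), ← mul_assoc]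
    refine mul_le_mul ?_ (hw θ) (wt_pos H θ).le ?_
    · exact (hf θ).trans (h2.trans (by gcongr; exact norm_pow_le_sum hn θ _))
    · exact mul_nonneg hG0 ((by positivity : 0 ≤ ‖θ‖ ^ _).trans (norm_pow_le_sum hn θ _))
  have hi := (integrable_sum_moment h (m + 2)).const_mul G
  have hsplit := integral_add_compl hΩ hfi
  have e : (∫ θ in Ω, f θ * wt A H θ) - ∫ θ, f θ * wt A H θ =
      -∫ θ in Ωᶜ, f θ * wt A H θ := by linarith
  rw [e, abs_neg]
  calc |∫ θ in Ωᶜ, f θ * wt A H θ|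
      ≤ ∫ θ in Ωᶜ, G * ((∑ j, θ j ^ (2 * (m + 2))) * gwt A s θ) :=
        norm_integral_le_of_norm_le hi.integrableOn
          ((ae_restrict_iff' hΩ.compl).2 (Filter.Eventually.of_forall hpt))
    _ ≤ ∫ θ, G * ((∑ j, θ j ^ (2 * (m + 2))) * gwt A s θ) := by
        refine setIntegral_le_integral hi (Filter.Eventually.of_forall fun θ => ?_)
        have := gwt_pos (A := A) s θ
        have : 0 ≤ ∑ j, θ j ^ (2 * (m + 2)) :=
          (by positivity : 0 ≤ ‖θ‖ ^ _).trans (norm_pow_le_sum hn θ _)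
        simp only [Pi.zero_apply]
        positivity
    _ ≤ G * (n * (mom B (m + 2) * L * ∫ θ, Real.exp (-quad A θ))) := by
        rw [integral_const_mul]
        exact mul_le_mul_of_nonneg_left (sum_moment_le h _) hG0
    _ = ((1 + 1 / r) ^ 4 / r ^ (2 * m) * mom B (m + 2) * L *
          ∫ θ, Real.exp (-quad A θ)) * (n / N ^ (2 * m)) := by
        rw [hG, mul_pow]; field_simp
    _ ≤ ((1 + 1 / r) ^ 4 / r ^ (2 * m) * mom B (m + 2) * L *
          ∫ θ, Real.exp (-quad A θ)) * (1 / n) := by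
        have := mom_nonneg h.B_nonneg (m + 2)
        have := h.L_nonneg
        gcongr ?_ * ?_
        rw [div_le_div_iff₀ (by positivity) hn0]
        linarith
    _ = _ := by ring

end Moments

/-! ### Estimates over the whole space -/

section WholeSpace

variable {n : ℕ} {A : Matrix (Fin n) (Fin n) ℝ}

lemma abs_mono_le (k l : Fin n) (i j : ℕ) (θ : Fin n → ℝ) :
    |θ k ^ i * θ l ^ j| ≤ (1 + ‖θ‖) ^ (i + j) := by
  have h : ∀ m, |θ m| ≤ 1 + ‖θ‖ := fun m => by
    have : |θ m| ≤ ‖θ‖ := norm_le_pi_norm θ m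
    linarith
  rw [abs_mul, abs_pow, abs_pow, pow_add]
  gcongr
  · exact h k
  · exact h l

lemma abs_integral_wt_le (hpd : A.PosDef) {s : ℝ} (hs : 0 < s) {H : (Fin n → ℝ) → ℝ}
    (hw : ∀ θ, wt A H θ ≤ gwt A s θ) {f : (Fin n → ℝ) → ℝ} {C Q : ℝ} (hC : 0 ≤ C) {p : ℕ}
    (hf : ∀ θ, |f θ| ≤ C * (1 + ‖θ‖) ^ p)
    (hQ : ∫ θ, (1 + ‖θ‖) ^ p * gwt A s θ ≤ Q) :
    |∫ θ, f θ * wt A H θ| ≤ C * Q := by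
  have hi := (integrable_mul_gwt hpd hs (PolyGrowth.norm_pow (n := n) p)).const_mul C
  calc |∫ θ, f θ * wt A H θ|
      ≤ ∫ θ, C * ((1 + ‖θ‖) ^ p * gwt A s θ) := by
        rw [← Real.norm_eq_abs]
        refine norm_integral_le_of_norm_le hi (Filter.Eventually.of_forall fun θ => ?_)
        rw [norm_mul, Real.norm_eq_abs, Real.norm_eq_abs, abs_of_pos (wt_pos H θ), ← mul_assoc]
        exact mul_le_mul (hf θ) (hw θ) (wt_pos H θ).le (by positivity)
    _ = C * ∫ θ, (1 + ‖θ‖) ^ p * gwt A s θ := integral_const_mul _ _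
    _ ≤ C * Q := mul_le_mul_of_nonneg_left hQ hC

/-- Only `‖v‖₁` matters for the size of a directional derivative of `H`, and `‖A⁻¹ e_k‖₁` is
bounded independently of `n`. -/
lemma abs_fderiv_le {c₁ c₂ D : ℝ} (hc₂ : 0 < c₂) {H : (Fin n → ℝ) → ℝ} (hn : 0 < n)
    (hH : CondH c₁ c₂ A H) {v : Fin n → ℝ} {k : Fin n}
    (hv : ∀ j, |v j - (Pi.single k 1 : Fin n → ℝ) j| ≤ D / n) (θ : Fin n → ℝ) :
    |fderiv ℝ H θ v| ≤ ((1 + D) * c₂ / n) * (1 + ‖θ‖) ^ 3 := by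
  have hn0 : (0 : ℝ) < n := by exact_mod_cast hn
  have hsum : ∑ j, |v j| ≤ 1 + D := by
    calc ∑ j, |v j| ≤ ∑ j, (|(Pi.single k 1 : Fin n → ℝ) j| + D / n) := by
          refine Finset.sum_le_sum fun j _ => ?_
          have h1 := abs_add_le (v j - (Pi.single k 1 : Fin n → ℝ) j)
            ((Pi.single k 1 : Fin n → ℝ) j)
          rw [sub_add_cancel] at h1
          linarith [hv j]
      _ = 1 + D := by
          rw [Finset.sum_add_distrib, Finset.sum_eq_single k]
          · simp; field_simp
          · intro j _ hj; simp [hj]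
          · simp
  have hx : ‖θ‖ ^ 3 + ‖θ‖ ≤ (1 + ‖θ‖) ^ 3 := by nlinarith [norm_nonneg θ, sq_nonneg ‖θ‖]
  have hexp : fderiv ℝ H θ v = ∑ j, v j * fderiv ℝ H θ (Pi.single j 1) := by
    conv_lhs => rw [pi_eq_sum_univ' v]
    simp only [map_sum, map_smul, smul_eq_mul]
  rw [hexp]
  calc |∑ j, v j * fderiv ℝ H θ (Pi.single j 1)|
      ≤ ∑ j, |v j * fderiv ℝ H θ (Pi.single j 1)| := Finset.abs_sum_le_sum_abs _ _
    _ ≤ ∑ j, |v j| * (c₂ * (1 + ‖θ‖) ^ 3 / n) := by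
        refine Finset.sum_le_sum fun j _ => ?_
        rw [abs_mul]
        refine mul_le_mul_of_nonneg_left ((hH.2.2 θ j).trans ?_) (abs_nonneg _)
        gcongr
    _ = (∑ j, |v j|) * (c₂ * (1 + ‖θ‖) ^ 3 / n) := by rw [Finset.sum_mul]
    _ ≤ (1 + D) * (c₂ * (1 + ‖θ‖) ^ 3 / n) := by gcongr
    _ = _ := by ring

/-- The three estimates for integrals over all of `ℝⁿ`, where integration by parts produces no
boundary terms. -/
lemma whole_space {a b c₁ c₂ s K N W : ℝ} (ha : 0 < a) (hb : 0 < b) (hc₂ : 0 < c₂)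
    (hA : CondA a b A) {H : (Fin n → ℝ) → ℝ} (hH : CondH c₁ c₂ A H) (hs : 0 < s)
    (hHs : ∀ θ, H θ ≤ (1 - s) * quad A θ) (hn : 0 < n) (hN : 1 ≤ N) (hM : 0 ≤ K * W)
    (hK : ∀ p ≤ 6, ∫ θ, (1 + ‖θ‖) ^ p * gwt A s θ ≤ K * N ^ p * W)
    {D F : ℝ} (hD : D = a + a ^ 2 * b) (hF : F = (1 + D) * c₂)
    (k l : Fin n) (hkl : k ≠ l) :
    |∫ θ, θ k * θ l * wt A H θ| ≤ (F + 2 * D) * (N ^ 5 / n * (K * W)) ∧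
    |∫ θ, θ k * θ l ^ 3 * wt A H θ| ≤ (F + 2 * D) * (N ^ 7 / n * (K * W)) ∧
    |(∫ θ, θ k ^ 2 * θ l ^ 2 * wt A H θ) - 1 / 4 * ∫ θ, wt A H θ| ≤
      (F + 2 * D) * (N ^ 7 / n * (K * W)) := by
  have hn0 : (0 : ℝ) < n := by exact_mod_cast hn
  have hD0 : 0 < D := by rw [hD]; positivity
  have hF0 : 0 < F := by rw [hF]; positivity
  have hsymm := hA.1
  have hpd := hA.2.1
  have ht : 1 - s < 1 := by linarith
  have hw : ∀ θ, wt A H θ ≤ gwt A s θ := fun θ => Real.exp_le_exp.2 (by linarith [hHs θ])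
  have hNle : ∀ {p r : ℕ}, p ≤ r → N ^ p ≤ N ^ r := fun h => pow_le_pow_right₀ hN h
  obtain ⟨v, hv, hvd⟩ := exists_col ha hb hA k
  obtain ⟨u, hu, hud⟩ := exists_col ha hb hA l
  rw [← hD] at hvd hud
  have hvl : |v l| ≤ D / n := by simpa [hkl.symm] using hvd l
  have hvk : |v k - 1| ≤ D / n := by simpa using hvd k
  have hul : |u l - 1| ≤ D / n := by simpa using hud l
  have hDH : ∀ {x : Fin n → ℝ} {j : Fin n},
      (∀ i, |x i - (Pi.single j 1 : Fin n → ℝ) i| ≤ D / n) → ∀ θ,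
      |fderiv ℝ H θ x| ≤ F / n * (1 + ‖θ‖) ^ 3 := by
    intro x j hx θ
    rw [hF]; exact abs_fderiv_le hc₂ hn hH hx θ
  have hDHp : ∀ {x : Fin n → ℝ} {j : Fin n},
      (∀ i, |x i - (Pi.single j 1 : Fin n → ℝ) i| ≤ D / n) →
      PolyGrowth fun θ => fderiv ℝ H θ x := fun hx =>
    ⟨(hH.1.continuous_fderiv (by simp)).clm_apply continuous_const, _, 3, hDH hx⟩
  -- Integrals carrying a factor `∂_x H` gain `1/n`; plain monomials are only bounded.
  have hR : ∀ {x : Fin n → ℝ} {y : Fin n},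
      (∀ i, |x i - (Pi.single y 1 : Fin n → ℝ) i| ≤ D / n) →
      ∀ (k' l' : Fin n) (i j r : ℕ), i + j + 3 ≤ 6 → i + j + 3 ≤ r →
      |∫ θ, θ k' ^ i * θ l' ^ j * fderiv ℝ H θ x * wt A H θ| ≤ F * (N ^ r / n * (K * W)) := by
    intro x y hx k' l' i j r h6 hr
    refine (abs_integral_wt_le hpd hs hw (C := F / n) (p := i + j + 3) (by positivity)
      (fun θ => ?_) (hK _ h6)).trans ?_
    · rw [abs_mul]
      calc |θ k' ^ i * θ l' ^ j| * |fderiv ℝ H θ x|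
          ≤ (1 + ‖θ‖) ^ (i + j) * (F / n * (1 + ‖θ‖) ^ 3) :=
            mul_le_mul (abs_mono_le _ _ _ _ _) (hDH hx θ) (abs_nonneg _) (by positivity)
        _ = _ := by ring
    · calc F / n * (K * N ^ (i + j + 3) * W) = F * (N ^ (i + j + 3) / n * (K * W)) := by ring
        _ ≤ _ := by
          refine mul_le_mul_of_nonneg_left (mul_le_mul_of_nonneg_right ?_ hM) hF0.le
          exact div_le_div_of_nonneg_right (hNle hr) hn0.le
  have hV : ∀ {x : ℝ}, |x| ≤ D / n → ∀ (k' l' : Fin n) (i j r : ℕ), i + j ≤ 6 → i + j ≤ r →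
      |x * ∫ θ, θ k' ^ i * θ l' ^ j * wt A H θ| ≤ D * (N ^ r / n * (K * W)) := by
    intro x hx k' l' i j r h6 hr
    have h1 : |∫ θ, θ k' ^ i * θ l' ^ j * wt A H θ| ≤ 1 * (K * N ^ (i + j) * W) :=
      abs_integral_wt_le hpd hs hw (p := i + j) one_pos.le
        (fun θ => by rw [one_mul]; exact abs_mono_le _ _ _ _ _) (hK _ h6)
    rw [abs_mul]
    calc |x| * |∫ θ, θ k' ^ i * θ l' ^ j * wt A H θ|
        ≤ D / n * (1 * (K * N ^ (i + j) * W)) :=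
          mul_le_mul hx h1 (abs_nonneg _) (by positivity)
      _ = D * (N ^ (i + j) / n * (K * W)) := by ring
      _ ≤ _ := by
          refine mul_le_mul_of_nonneg_left (mul_le_mul_of_nonneg_right ?_ hM) hD0.le
          exact div_le_div_of_nonneg_right (hNle hr) hn0.le
  have h1 := ibp hsymm hpd hv hH.1 ht hHs (hDHp hvd) l 0 1
  have h2 := ibp hsymm hpd hv hH.1 ht hHs (hDHp hvd) l 0 3
  have h3 := ibp hsymm hpd hv hH.1 ht hHs (hDHp hvd) l 1 2
  have h4 := ibp hsymm hpd hu hH.1 ht hHs (hDHp hud) l 0 1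
  have r1 := hR hvd k l 0 1 5 (by norm_num) (by norm_num)
  have r2 := hR hvd k l 0 3 7 (by norm_num) (by norm_num)
  have r3 := hR hvd k l 1 2 7 (by norm_num) (by norm_num)
  have r4 := hR hud l l 0 1 7 (by norm_num) (by norm_num)
  have w1 := hV hvl k l 0 0 5 (by norm_num) (by norm_num)
  have w2 := hV hvl k l 0 2 7 (by norm_num) (by norm_num)
  have w3 := hV hvl k l 1 1 7 (by norm_num) (by norm_num)
  have w4 := hV hvk k l 0 2 7 (by norm_num) (by norm_num)
  have w5 := hV hul k l 0 0 7 (by norm_num) (by norm_num)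
  have x3 : ∀ θ : Fin n → ℝ, θ k * (θ k * θ l ^ 2) = θ k ^ 2 * θ l ^ 2 := fun θ => by ring
  have x4 : ∀ θ : Fin n → ℝ, θ l * θ l = θ l ^ 2 := fun θ => by ring
  norm_num [x3, x4] at h1 h2 h3 h4 r1 r2 r3 r4 w1 w2 w3 w4 w5
  have hU5 : 0 ≤ N ^ 5 / n * (K * W) := mul_nonneg (by positivity) hM
  have hU7 : 0 ≤ N ^ 7 / n * (K * W) := mul_nonneg (by positivity) hM
  set U5 := N ^ 5 / n * (K * W)
  set U7 := N ^ 7 / n * (K * W)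
  have hDU5 : 0 ≤ D * U5 := by positivity
  have hDU7 : 0 ≤ D * U7 := by positivity
  have hFU5 : 0 ≤ F * U5 := by positivity
  have hFU7 : 0 ≤ F * U7 := by positivity
  rw [← abs_mul, abs_le] at w1 w2 w3 w4 w5
  rw [abs_le] at r1 r2 r3 r4 ⊢
  rw [abs_le, abs_le]
  refine ⟨⟨?_, ?_⟩, ⟨?_, ?_⟩, ⟨?_, ?_⟩⟩ <;> linarith

end WholeSpace

/-! ### Large and small dimensions -/

section Regimes

variable {n : ℕ} {A : Matrix (Fin n) (Fin n) ℝ}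

lemma tame_of_condA {a b s L : ℝ} (ha : 0 < a) (hb : 0 < b) (hA : CondA a b A) (hs : 1 / 2 ≤ s)
    (hL : 0 ≤ L) (hmass : (Real.sqrt s ^ n)⁻¹ ≤ L) : Tame A s (1 + (a + a ^ 2 * b)) L where
  symm := hA.1
  posDef := hA.2.1
  half_le := hs
  B_nonneg := by positivity
  L_nonneg := hL
  col := fun j => by
    obtain ⟨v, hv, hvd⟩ := exists_col ha hb hA j
    refine ⟨v, hv, ?_⟩
    have h1 : |v j - 1| ≤ (a + a ^ 2 * b) / n := by simpa using hvd j
    have hn : (1 : ℝ) ≤ n := by exact_mod_cast j.pos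
    have h2 : (a + a ^ 2 * b) / n ≤ a + a ^ 2 * b := div_le_self (by positivity) hn
    linarith [le_abs_self (v j - 1)]
  mass := by
    rw [integral_gwt_scale (by linarith)]
    exact mul_le_mul_of_nonneg_right hmass (integral_nonneg fun θ => (Real.exp_pos _).le)

/-- `(1 - c/n)^{-n/2} ≤ e^c` once `n ≥ 2c`. -/
lemma mass_large {c : ℝ} (hc : 0 < c) (hn : 0 < n) (h : 2 * c ≤ n) :
    (Real.sqrt (1 - c / n) ^ n)⁻¹ ≤ Real.exp c := by
  have hn0 : (0 : ℝ) < n := by exact_mod_cast hn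
  set x := c / n with hx
  have hx0 : 0 < x := by positivity
  have hx1 : x ≤ 1 / 2 := by rw [hx, div_le_iff₀ hn0]; linarith
  have h1 : Real.exp (-(2 * x)) ≤ 1 - x := by
    rw [Real.exp_neg, inv_le_comm₀ (Real.exp_pos _) (by linarith)]
    refine le_trans ?_ (Real.add_one_le_exp _)
    rw [inv_le_iff_one_le_mul₀ (by linarith)]
    nlinarith
  have h2 : Real.exp (-x) ≤ Real.sqrt (1 - x) := by
    refine Real.le_sqrt_of_sq_le ?_
    rw [← Real.exp_nat_mul]
    refine le_trans (le_of_eq ?_) h1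
    congr 1; push_cast; ring
  have h3 : Real.exp (-c) ≤ Real.sqrt (1 - x) ^ n := by
    calc Real.exp (-c) = Real.exp (-x) ^ n := by
          rw [← Real.exp_nat_mul]; congr 1; rw [hx]; field_simp
      _ ≤ _ := by gcongr
  calc (Real.sqrt (1 - x) ^ n)⁻¹ ≤ (Real.exp (-c))⁻¹ := inv_anti₀ (Real.exp_pos _) h3
    _ = Real.exp c := by rw [Real.exp_neg, inv_inv]

lemma mass_small {n₀ : ℕ} (h : n ≤ n₀) :
    (Real.sqrt (1 / 2) ^ n)⁻¹ ≤ 2 ^ n₀ := by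
  have h1 : (1 / 2 : ℝ) ≤ Real.sqrt (1 / 2) := Real.le_sqrt_of_sq_le (by norm_num)
  calc (Real.sqrt (1 / 2) ^ n)⁻¹ ≤ ((1 / 2 : ℝ) ^ n)⁻¹ :=
        inv_anti₀ (by positivity) (by gcongr)
    _ = 2 ^ n := by rw [one_div, inv_pow, inv_inv]
    _ ≤ 2 ^ n₀ := pow_le_pow_right₀ (by norm_num) h

/-- For bounded `n` every integral over `Ω` is trivially `O(W)`, since `Ω` lies in a fixed cube,
on which `e^H` is bounded. -/
lemma small_le {a b c₁ c₂ K N R W : ℝ} (ha : 0 < a) (hc₁ : 0 < c₁)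
    (hA : CondA a b A) {H : (Fin n → ℝ) → ℝ} (hH : CondH c₁ c₂ A H) (hn : 0 < n)
    (hn1 : (n : ℝ) ≤ 2 * c₁)
    (hK : ∫ θ, (1 + ‖θ‖) ^ 4 * gwt A (1 / 2) θ ≤ K * N ^ 4 * W)
    {Ω : Set (Fin n → ℝ)} (hΩ : MeasurableSet Ω) (hsub : Ω ⊆ Uset n R) (hR : 0 ≤ R)
    {f : (Fin n → ℝ) → ℝ} (hf : ∀ θ, |f θ| ≤ (1 + ‖θ‖) ^ 4) :
    |∫ θ in Ω, f θ * wt A H θ| ≤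
      Real.exp (c₁ * (2 * c₁) * (1 + a) * R ^ 2) * (K * N ^ 4 * W) := by
  have hn0 : (0 : ℝ) < n := by exact_mod_cast hn
  set G := Real.exp (c₁ * (2 * c₁) * (1 + a) * R ^ 2) with hG
  have hG0 : 0 < G := Real.exp_pos _
  have hi := (integrable_mul_gwt hA.2.1 (by norm_num : (0 : ℝ) < 1 / 2)
    (PolyGrowth.norm_pow (n := n) 4)).const_mul G
  calc |∫ θ in Ω, f θ * wt A H θ|
      ≤ ∫ θ in Ω, G * ((1 + ‖θ‖) ^ 4 * gwt A (1 / 2) θ) := by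
        rw [← Real.norm_eq_abs]
        refine norm_integral_le_of_norm_le hi.integrableOn
          ((ae_restrict_iff' hΩ).2 (Filter.Eventually.of_forall fun θ hθ => ?_))
        have hθR : ‖θ‖ ≤ R := (pi_norm_le_iff_of_nonneg hR).2 (hsub hθ)
        have hwt : wt A H θ ≤ G * gwt A (1 / 2) θ := by
          rw [gwt_eq, hG, wt, ← Real.exp_add]
          refine Real.exp_le_exp.2 ?_
          have hq := quad_nonneg hA.2.1 θ
          have hHθ : H θ ≤ c₁ * (2 * c₁) * (1 + a) * R ^ 2 := by
            calc H θ ≤ c₁ * quad A θ / n := hH.2.1 θ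
              _ ≤ c₁ * (n ^ 2 * (1 + a) * R ^ 2) / n := by
                  gcongr
                  exact (quad_le ha hA θ).trans (by gcongr)
              _ = c₁ * n * (1 + a) * R ^ 2 := by field_simp
              _ ≤ _ := by gcongr
          linarith
        rw [norm_mul, Real.norm_eq_abs, Real.norm_eq_abs, abs_of_pos (wt_pos H θ)]
        calc |f θ| * wt A H θ ≤ (1 + ‖θ‖) ^ 4 * (G * gwt A (1 / 2) θ) :=
              mul_le_mul (hf θ) hwt (wt_pos H θ).le (by positivity)
          _ = _ := by ring
    _ ≤ ∫ θ, G * ((1 + ‖θ‖) ^ 4 * gwt A (1 / 2) θ) := by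
        refine setIntegral_le_integral hi (Filter.Eventually.of_forall fun θ => ?_)
        have := gwt_pos (A := A) (1 / 2) θ
        simp only [Pi.zero_apply]
        positivity
    _ ≤ _ := by
        rw [integral_const_mul]
        exact mul_le_mul_of_nonneg_left hK hG0.le

end Regimes

/-- The estimates with the weight and the quadratic form abbreviated as `wt` and `quad`. -/
lemma main_aux (a b ε r₁ r₂ c₁ c₂ : ℝ) (ha : 0 < a) (hb : 0 < b)
    (hε : 0 < ε) (hr₁ : 0 < r₁) (hr₁₂ : r₁ < r₂) (hc₁ : 0 < c₁) (hc₂ : 0 < c₂) :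
    ∃ c : ℝ, 0 < c ∧
      ∀ (n : ℕ) (A : Matrix (Fin n) (Fin n) ℝ), CondA a b A →
      ∀ H : (Fin n → ℝ) → ℝ, CondH c₁ c₂ A H →
      ∀ Ω : Set (Fin n → ℝ), MeasurableSet Ω →
        Uset n (r₁ * (n : ℝ) ^ (ε : ℝ)) ⊆ Ω → Ω ⊆ Uset n (r₂ * (n : ℝ) ^ (ε : ℝ)) →
        ∀ k l : Fin n, k ≠ l →
        (|∫ θ in Ω, θ k * θ l * wt A H θ| ≤
          c * (n : ℝ) ^ (-1 + 5 * ε) * ∫ θ : Fin n → ℝ, Real.exp (-quad A θ)) ∧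
        (|∫ θ in Ω, θ k * θ l ^ 3 * wt A H θ| ≤
          c * (n : ℝ) ^ (-1 + 7 * ε) * ∫ θ : Fin n → ℝ, Real.exp (-quad A θ)) ∧
        (|(∫ θ in Ω, θ k ^ 2 * θ l ^ 2 * wt A H θ) - (1 / 4) * ∫ θ in Ω, wt A H θ| ≤
          c * (n : ℝ) ^ (-1 + 7 * ε) * ∫ θ : Fin n → ℝ, Real.exp (-quad A θ)) := by
  obtain ⟨m, hm⟩ := exists_nat_ge (3 + 1 / ε)
  have hm3 : (3 : ℝ) ≤ m := by
    have : 0 < 1 / ε := by positivity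
    linarith
  have hm3' : 3 ≤ m := by exact_mod_cast hm3
  have hmε : 1 ≤ m * ε := by
    have : 1 / ε ≤ m := by linarith
    rwa [div_le_iff₀ hε] at this
  set D := a + a ^ 2 * b with hD
  set F := (1 + D) * c₂ with hF
  set n₀ := ⌈2 * c₁⌉₊ with hn₀
  have hD0 : 0 < D := by positivity
  have hF0 : 0 < F := by positivity
  have hr₂ : 0 < r₂ := hr₁.trans hr₁₂
  have hmom : ∀ i, 0 ≤ mom (1 + D) i := mom_nonneg (by positivity)
  -- constants for the regimes `n ≥ 2c₁` and `n < 2c₁`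
  set K₁ := 2 ^ 6 * (1 + mom (1 + D) m) * Real.exp c₁ with hK₁
  set T := (1 + 1 / r₁) ^ 4 / r₁ ^ (2 * m) * mom (1 + D) (m + 2) * Real.exp c₁ with hT
  set K₂ := 2 ^ 6 * (1 + mom (1 + D) m) * 2 ^ n₀ with hK₂
  set G := Real.exp (c₁ * (2 * c₁) * (1 + a) * (r₂ * (2 * c₁) ^ ε) ^ 2) with hG
  have hK₁0 : 0 < K₁ := by have := hmom m; positivity
  have hK₂0 : 0 < K₂ := by have := hmom m; positivity
  have hT0 : 0 ≤ T := by have := hmom (m + 2); positivity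
  have hG0 : 0 < G := Real.exp_pos _
  refine ⟨((F + 2 * D) * K₁ + 2 * T) + 2 * (G * K₂ * (2 * c₁)), by positivity, ?_⟩
  intro n A hA H hH Ω hΩ hΩ₁ hΩ₂ k l hkl
  have hn : 0 < n := k.pos
  have hn0 : (0 : ℝ) < n := by exact_mod_cast hn
  have hn1 : (1 : ℝ) ≤ n := by exact_mod_cast hn
  set N := (n : ℝ) ^ ε with hN
  have hN1 : 1 ≤ N := Real.one_le_rpow hn1 hε.le
  have hN0 : 0 < N := by linarith
  have hpow : ∀ i : ℕ, N ^ i = (n : ℝ) ^ (i * ε) := fun i => by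
    rw [hN, ← Real.rpow_natCast, ← Real.rpow_mul hn0.le, mul_comm]
  have hexp : ∀ i : ℕ, (n : ℝ) ^ (-1 + i * ε) = N ^ i / n := fun i => by
    rw [hpow, Real.rpow_add hn0, Real.rpow_neg_one]; ring
  have h5 : (n : ℝ) ^ (-1 + 5 * ε) = N ^ 5 / n := by exact_mod_cast hexp 5
  have h7 : (n : ℝ) ^ (-1 + 7 * ε) = N ^ 7 / n := by exact_mod_cast hexp 7
  rw [h5, h7]
  have hn2N : (n : ℝ) ^ 2 ≤ N ^ (2 * m) := by
    rw [hpow, ← Real.rpow_natCast]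
    refine Real.rpow_le_rpow_of_exponent_le hn1 ?_
    push_cast; linarith
  have hnN : (n : ℝ) ≤ N ^ (2 * m) := le_trans (by nlinarith) hn2N
  set W := ∫ θ : Fin n → ℝ, Real.exp (-quad A θ) with hW
  have hW0 : 0 ≤ W := integral_nonneg fun θ => (Real.exp_pos _).le
  have hNn : ∀ i, 0 ≤ N ^ i / n * W := fun i => by positivity
  have hp6 : ∀ p ≤ 6, p ≤ 2 * m := fun p hp => by omega
  have f1 : ∀ θ : Fin n → ℝ, |θ k * θ l| ≤ (1 + ‖θ‖) ^ 4 := fun θ => by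
    have h := abs_mono_le k l 1 1 θ
    rw [pow_one, pow_one] at h
    exact h.trans (pow_le_pow_right₀ (by linarith [norm_nonneg θ]) (by norm_num))
  have f2 : ∀ θ : Fin n → ℝ, |θ k * θ l ^ 3| ≤ (1 + ‖θ‖) ^ 4 := fun θ => by
    simpa using abs_mono_le k l 1 3 θ
  have f3 : ∀ θ : Fin n → ℝ, |θ k ^ 2 * θ l ^ 2| ≤ (1 + ‖θ‖) ^ 4 := fun θ =>
    abs_mono_le k l 2 2 θ
  have f4 : ∀ θ : Fin n → ℝ, |(1 : ℝ)| ≤ (1 + ‖θ‖) ^ 4 := fun θ => by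
    rw [abs_one]; exact one_le_pow₀ (by linarith [norm_nonneg θ])
  rcases le_or_gt (2 * c₁) n with hlarge | hsmall
  · have hs2 : (1 : ℝ) / 2 ≤ 1 - c₁ / n := by
      have : c₁ / n ≤ 1 / 2 := by rw [div_le_iff₀ hn0]; linarith
      linarith
    have hs0 : (0 : ℝ) < 1 - c₁ / n := by linarith
    have tame := tame_of_condA ha hb hA hs2 (Real.exp_pos c₁).le (mass_large hc₁ hn hlarge)
    have hHs : ∀ θ, H θ ≤ (1 - (1 - c₁ / n)) * quad A θ := fun θ => by
      refine (hH.2.1 θ).trans (le_of_eq ?_)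
      unfold quad; ring
    have hw : ∀ θ, wt A H θ ≤ gwt A (1 - c₁ / n) θ :=
      fun θ => Real.exp_le_exp.2 (by linarith [hHs θ])
    obtain ⟨e1, e2, e3⟩ := whole_space ha hb hc₂ hA hH hs0 hHs hn hN1
      (mul_nonneg hK₁0.le hW0)
      (fun p hp => norm_moment_le tame hn hN1 hnN hp (hp6 p hp)) hD hF k l hkl
    have hIntg : ∀ {f : (Fin n → ℝ) → ℝ}, PolyGrowth f → Integrable fun θ => f θ * wt A H θ :=
      fun hf => integrable_mul_wt hA.2.1 hH.1.continuous (by linarith) hHs hf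
    have t1 := tail_le tame hn hN1 hr₁ hn2N hΩ hΩ₁ hw f1
      (hIntg ((PolyGrowth.coord k).mul (PolyGrowth.coord l)))
    have t2 := tail_le tame hn hN1 hr₁ hn2N hΩ hΩ₁ hw f2
      (hIntg ((PolyGrowth.coord k).mul (PolyGrowth.coord_pow l 3)))
    have t3 := tail_le tame hn hN1 hr₁ hn2N hΩ hΩ₁ hw f3 (hIntg (PolyGrowth.mono k l 2 2))
    have t4 := tail_le tame hn hN1 hr₁ hn2N hΩ hΩ₁ hw f4 (hIntg (PolyGrowth.const 1))
    simp only [one_mul] at t4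
    rw [← hD, ← hT, ← hW] at t1 t2 t3 t4
    have hTN : ∀ i, T / n * W ≤ T * (N ^ i / n * W) := fun i => by
      have : 1 ≤ N ^ i := one_le_pow₀ hN1
      calc T / n * W = T * (1 / n * W) := by ring
        _ ≤ _ := by gcongr
    have hX := mul_nonneg (by positivity : 0 ≤ 2 * (G * K₂ * (2 * c₁))) (hNn 5)
    have hX' := mul_nonneg (by positivity : 0 ≤ 2 * (G * K₂ * (2 * c₁))) (hNn 7)
    have hY := mul_nonneg hT0 (hNn 5)
    have hY' := mul_nonneg hT0 (hNn 7)
    have hT5 := hTN 5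
    have hT7 := hTN 7
    rw [abs_le] at e1 e2 e3 t1 t2 t3 t4
    refine ⟨abs_le.2 ⟨?_, ?_⟩, abs_le.2 ⟨?_, ?_⟩, abs_le.2 ⟨?_, ?_⟩⟩ <;> linarith
  · have hnn₀ : n ≤ n₀ := by
      have : (n : ℝ) ≤ n₀ := hsmall.le.trans (Nat.le_ceil _)
      exact_mod_cast this
    have tame := tame_of_condA ha hb hA le_rfl (by positivity) (mass_small hnn₀)
    have hK := norm_moment_le tame hn hN1 hnN (by norm_num : 4 ≤ 6) (hp6 4 (by norm_num))
    rw [← hD, ← hK₂, ← hW] at hK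
    have hsub : Ω ⊆ Uset n (r₂ * (2 * c₁) ^ ε) := fun θ hθ j => (hΩ₂ hθ j).trans (by
      rw [hN]
      have := Real.rpow_le_rpow hn0.le hsmall.le hε.le
      gcongr)
    have hsm : ∀ {f : (Fin n → ℝ) → ℝ}, (∀ θ, |f θ| ≤ (1 + ‖θ‖) ^ 4) →
        |∫ θ in Ω, f θ * wt A H θ| ≤ G * (K₂ * N ^ 4 * W) := fun hf =>
      small_le ha hc₁ hA hH hn hsmall.le hK hΩ hsub (by positivity) hf
    have hup : ∀ i ≥ 4, G * (K₂ * N ^ 4 * W) ≤ G * K₂ * (2 * c₁) * (N ^ i / n * W) := by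
      intro i hi
      have h1 : N ^ 4 ≤ N ^ i := pow_le_pow_right₀ hN1 hi
      calc G * (K₂ * N ^ 4 * W) = G * K₂ * n * (N ^ 4 / n * W) := by field_simp
        _ ≤ _ := by gcongr
    have t1 := (hsm f1).trans (hup 5 (by norm_num))
    have t2 := (hsm f2).trans (hup 7 (by norm_num))
    have t3 := (hsm f3).trans (hup 7 (by norm_num))
    have t4 := (hsm f4).trans (hup 7 (by norm_num))
    simp only [one_mul] at t4
    have hX := mul_nonneg (by positivity : 0 ≤ (F + 2 * D) * K₁ + 2 * T) (hNn 5)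
    have hX' := mul_nonneg (by positivity : 0 ≤ (F + 2 * D) * K₁ + 2 * T) (hNn 7)
    have hY := mul_nonneg (by positivity : 0 ≤ G * K₂ * (2 * c₁)) (hNn 5)
    have hY' := mul_nonneg (by positivity : 0 ≤ G * K₂ * (2 * c₁)) (hNn 7)
    rw [abs_le] at t1 t2 t3 t4
    refine ⟨abs_le.2 ⟨?_, ?_⟩, abs_le.2 ⟨?_, ?_⟩, abs_le.2 ⟨?_, ?_⟩⟩ <;> linarith

/-- Lemma 4.2, (4.23)–(4.25): mixed moments of two distinct coordinates. -/
theorem integral_mixed_moment_estimates (a b ε r₁ r₂ c₁ c₂ : ℝ) (ha : 0 < a) (hb : 0 < b)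
    (hε : 0 < ε) (hr₁ : 0 < r₁) (hr₁₂ : r₁ < r₂) (hc₁ : 0 < c₁) (hc₂ : 0 < c₂) :
    ∃ c : ℝ, 0 < c ∧
      ∀ (n : ℕ) (A : Matrix (Fin n) (Fin n) ℝ), CondA a b A →
      ∀ H : (Fin n → ℝ) → ℝ, CondH c₁ c₂ A H →
      ∀ Ω : Set (Fin n → ℝ), MeasurableSet Ω →
        Uset n (r₁ * (n : ℝ) ^ (ε : ℝ)) ⊆ Ω → Ω ⊆ Uset n (r₂ * (n : ℝ) ^ (ε : ℝ)) →
        ∀ k l : Fin n, k ≠ l →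
        (|∫ θ in Ω, θ k * θ l * Real.exp (-(θ ⬝ᵥ A.mulVec θ) + H θ)| ≤
          c * (n : ℝ) ^ (-1 + 5 * ε) * ∫ θ : Fin n → ℝ, Real.exp (-(θ ⬝ᵥ A.mulVec θ))) ∧
        (|∫ θ in Ω, θ k * θ l ^ 3 * Real.exp (-(θ ⬝ᵥ A.mulVec θ) + H θ)| ≤
          c * (n : ℝ) ^ (-1 + 7 * ε) * ∫ θ : Fin n → ℝ, Real.exp (-(θ ⬝ᵥ A.mulVec θ))) ∧
        (|(∫ θ in Ω, θ k ^ 2 * θ l ^ 2 * Real.exp (-(θ ⬝ᵥ A.mulVec θ) + H θ)) -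
            (1 / 4) * ∫ θ in Ω, Real.exp (-(θ ⬝ᵥ A.mulVec θ) + H θ)| ≤
          c * (n : ℝ) ^ (-1 + 7 * ε) * ∫ θ : Fin n → ℝ, Real.exp (-(θ ⬝ᵥ A.mulVec θ))) :=
  main_aux a b ε r₁ r₂ c₁ c₂ ha hb hε hr₁ hr₁₂ hc₁ hc₂
end

section
/- Fix a, b > 0, ε > 0, r₂ > r₁ > 0, c₁, c₂ > 0 and an integer s > 0. There exists a constant c > 0, depending only on r₁, r₂, c₁, c₂, a, b, ε, s, such that for every n, every matrix A satisfying condition (A), every H satisfying conditions (H1)–(H2), every region Ω with U_n(r₁n^ε) ⊆ Ω ⊆ U_n(r₂n^ε), every index k, and all nonnegative integers s₁,…,s_n with s₁ + … + s_n = s, s_k = 0, and at most 3 indices j with s_j ≠ 0: | ⟨φ_k(θ)·∏_{j=1}^{n} φ_j(θ)^{s_j}⟩_{F,Ω} | ≤ c·s·n^{−1+(s+4)ε}·⟨1⟩, where φ(θ) = Aθ and φ_j(θ) is its j-th component. -/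
/-!
The weight `exp (-θᵀAθ)` has logarithmic `∂ₖ`-derivative `-2 φₖ`, so a factor `φₖ` can be
integrated by parts. For `ψ = ∏ φⱼ ^ sⱼ` and the density `exp F` this gives
`2 ⟨φₖ ψ⟩ = ⟨∂ₖψ + ψ ∂ₖH⟩` (`two_mul_integral_eq`), and both terms on the right carry a
factor `1 / n`: the first because `sₖ = 0`, so that only off-diagonal entries of `A` occur in
`∂ₖψ` (`abs_monomDeriv_le`), the second by the gradient bound on `H`.

The integration by parts is carried out over all of `ℝⁿ`, which avoids boundary terms and requires
no regularity of `Ω`. This is possible because `H ≤ c₁ θᵀAθ / n` everywhere, so that for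
`n ≥ 2 c₁` the density is dominated by the flattened weight `exp (-(1 - c₁ / n) θᵀAθ)`, whose mass
is at most `exp (2 c₁)` times that of the original one (`integral_gaussWeight_le`).

What remains are moments of `‖θ‖_∞` under that weight and the tail outside the cube of radius
`r₁ n ^ ε` (`exists_moment_bound`). Completing the square bounds the exponential moments
of each coordinate in terms of `(A⁻¹)ⱼⱼ ≤ b`, hence every moment of `‖θ‖_∞` is at most a constant
times `n`. A moment of order `m + q` with `q ε ≥ 2`, divided by `(n ^ ε) ^ q ≥ n ^ 2`, then controls
both the moment of order `m` and its tail. For the finitely many `n ≤ 2 c₁` a pointwise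
bound on `Ω` is enough (`small_dim_bound`).
-/

open MeasureTheory Matrix Finset

/-! ### The quadratic form and its Gaussian weight -/

/-- The quadratic form `θᵀAθ`. -/
noncomputable def quadForm {n : ℕ} (A : Matrix (Fin n) (Fin n) ℝ) (θ : Fin n → ℝ) : ℝ :=
  θ ⬝ᵥ A.mulVec θ

lemma continuous_mulVec {n : ℕ} (A : Matrix (Fin n) (Fin n) ℝ) :
    Continuous fun θ : Fin n → ℝ => A.mulVec θ := by
  fun_prop

lemma continuous_quadForm {n : ℕ} (A : Matrix (Fin n) (Fin n) ℝ) :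
    Continuous (quadForm A) := by
  unfold quadForm
  fun_prop

lemma quadForm_smul {n : ℕ} (A : Matrix (Fin n) (Fin n) ℝ) (t : ℝ) (θ : Fin n → ℝ) :
    quadForm A (t • θ) = t ^ 2 * quadForm A θ := by
  simp only [quadForm, mulVec_smul, dotProduct_smul, smul_dotProduct, smul_eq_mul]
  ring

lemma quadForm_add {n : ℕ} {A : Matrix (Fin n) (Fin n) ℝ} (hA : A.IsSymm) (x y : Fin n → ℝ) :
    quadForm A (x + y) = quadForm A x + 2 * (x ⬝ᵥ A.mulVec y) + quadForm A y := by
  have h : y ⬝ᵥ A.mulVec x = x ⬝ᵥ A.mulVec y := by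
    rw [dotProduct_mulVec, ← mulVec_transpose, hA.eq, dotProduct_comm]
  simp only [quadForm, mulVec_add, dotProduct_add, add_dotProduct, h]
  ring

lemma quadForm_nonneg {n : ℕ} {A : Matrix (Fin n) (Fin n) ℝ} (hA : A.PosDef) (θ : Fin n → ℝ) :
    0 ≤ quadForm A θ := by
  simpa [quadForm] using hA.posSemidef.dotProduct_mulVec_nonneg θ

/-- Coercivity, by compactness of the unit sphere. -/
lemma exists_quadForm_lower {n : ℕ} [NeZero n] {A : Matrix (Fin n) (Fin n) ℝ} (hA : A.PosDef) :
    ∃ c : ℝ, 0 < c ∧ ∀ θ : Fin n → ℝ, c * ‖θ‖ ^ 2 ≤ quadForm A θ := by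
  have hne : (Metric.sphere (0 : Fin n → ℝ) 1).Nonempty :=
    NormedSpace.sphere_nonempty.2 zero_le_one
  obtain ⟨x, hx, hmin⟩ := (isCompact_sphere (0 : Fin n → ℝ) 1).exists_isMinOn hne
    (continuous_quadForm A).continuousOn
  have hx1 : ‖x‖ = 1 := by simpa using hx
  have hx0 : x ≠ 0 := by
    rintro rfl
    simp at hx1
  refine ⟨quadForm A x, by simpa [quadForm] using hA.dotProduct_mulVec_pos hx0, fun θ => ?_⟩
  by_cases h0 : θ = 0
  · simp [h0, quadForm]
  have hn : ‖θ‖ ≠ 0 := norm_ne_zero_iff.2 h0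
  have hmem : ‖θ‖⁻¹ • θ ∈ Metric.sphere (0 : Fin n → ℝ) 1 := by
    simp [norm_smul, hn]
  have h1 : quadForm A x ≤ quadForm A (‖θ‖⁻¹ • θ) := hmin hmem
  calc quadForm A x * ‖θ‖ ^ 2 ≤ quadForm A (‖θ‖⁻¹ • θ) * ‖θ‖ ^ 2 := by gcongr
    _ = quadForm A θ := by rw [quadForm_smul]; field_simp

/-- The Gaussian weight `exp (-lam θᵀAθ)`. -/
noncomputable def gaussWeight {n : ℕ} (A : Matrix (Fin n) (Fin n) ℝ) (lam : ℝ)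
    (θ : Fin n → ℝ) : ℝ :=
  Real.exp (-(lam * quadForm A θ))

lemma continuous_gaussWeight {n : ℕ} (A : Matrix (Fin n) (Fin n) ℝ) (lam : ℝ) :
    Continuous (gaussWeight A lam) := by
  unfold gaussWeight
  have := continuous_quadForm A
  fun_prop

lemma gaussWeight_pos {n : ℕ} (A : Matrix (Fin n) (Fin n) ℝ) (lam : ℝ) (θ : Fin n → ℝ) :
    0 < gaussWeight A lam θ := Real.exp_pos _

lemma integrable_gaussWeight {n : ℕ} [NeZero n] {A : Matrix (Fin n) (Fin n) ℝ} (hA : A.PosDef)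
    {lam : ℝ} (hl : 0 < lam) : Integrable (gaussWeight A lam) := by
  obtain ⟨c, hc, hlow⟩ := exists_quadForm_lower hA
  have hn : (0 : ℝ) < n := Nat.cast_pos.2 (NeZero.pos n)
  have hprod : Integrable fun θ : Fin n → ℝ =>
      ∏ j, Real.exp (-(lam * c / n) * θ j ^ 2) :=
    Integrable.fintype_prod (f := fun _ x => Real.exp (-(lam * c / n) * x ^ 2))
      fun _ => integrable_exp_neg_mul_sq (by positivity)
  refine hprod.mono' (continuous_gaussWeight A lam).aestronglyMeasurable
    (Filter.Eventually.of_forall fun θ => ?_)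
  rw [Real.norm_of_nonneg (gaussWeight_pos A lam θ).le, ← Real.exp_sum, gaussWeight,
    Real.exp_le_exp, ← Finset.mul_sum]
  have hsum : ∑ j, θ j ^ 2 ≤ n * ‖θ‖ ^ 2 := by
    have : ∑ j, θ j ^ 2 ≤ ∑ _j : Fin n, ‖θ‖ ^ 2 := by
      refine Finset.sum_le_sum fun j _ => ?_
      rw [← sq_abs]
      have : |θ j| ≤ ‖θ‖ := norm_le_pi_norm θ j
      gcongr
    simpa using this
  have h2 : lam * c / n * ∑ j, θ j ^ 2 ≤ lam * quadForm A θ :=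
    calc lam * c / n * ∑ j, θ j ^ 2 ≤ lam * c / n * (n * ‖θ‖ ^ 2) := by gcongr
      _ = lam * (c * ‖θ‖ ^ 2) := by field_simp
      _ ≤ _ := by gcongr; exact hlow θ
  linarith

/-- The mass of the weight with parameter `lam = 1 - d / n` is at most a constant
times that of `exp (-θᵀAθ)`, by the change of variables `θ ↦ √lam • θ`. -/
lemma integral_gaussWeight_le {n : ℕ} [NeZero n] {A : Matrix (Fin n) (Fin n) ℝ}
    {d : ℝ} (hd : 0 < d) (hn : 2 * d ≤ n) :
    ∫ θ, gaussWeight A (1 - d / n) θ ≤ Real.exp (2 * d) * ∫ θ, gaussWeight A 1 θ := by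
  have hn0 : (0 : ℝ) < n := Nat.cast_pos.2 (NeZero.pos n)
  set x : ℝ := d / n with hx
  have hx0 : 0 < x := by positivity
  have hx2 : x ≤ 1 / 2 := by rw [hx, div_le_iff₀ hn0]; linarith
  have hnx : (n : ℝ) * (2 * x) = 2 * d := by rw [hx]; field_simp
  have hl : 0 < 1 - x := by linarith
  have h1 : ∀ θ : Fin n → ℝ, gaussWeight A (1 - x) θ = gaussWeight A 1 (√(1 - x) • θ) := by
    intro θ
    simp [gaussWeight, quadForm_smul, Real.sq_sqrt hl.le]
  simp_rw [h1]
  rw [Measure.integral_comp_smul]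
  have hZ : 0 ≤ ∫ θ, gaussWeight A 1 θ := integral_nonneg fun θ => (gaussWeight_pos A 1 θ).le
  rw [smul_eq_mul]
  refine mul_le_mul_of_nonneg_right ?_ hZ
  rw [Module.finrank_fin_fun, abs_of_nonneg (by positivity)]
  -- as `1 - x ≤ 1`, the root can be discarded, and `(1 - x)⁻¹ ≤ 1 + 2 x ≤ exp (2 x)`
  have hs : 1 - x ≤ √(1 - x) := by
    apply Real.le_sqrt_of_sq_le
    nlinarith
  have hinv : (1 - x)⁻¹ ≤ Real.exp (2 * x) := by
    have h2 : (1 - x)⁻¹ ≤ 2 * x + 1 := by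
      rw [inv_le_iff_one_le_mul₀ hl]
      nlinarith
    exact h2.trans (Real.add_one_le_exp _)
  calc (√(1 - x) ^ n)⁻¹ ≤ ((1 - x) ^ n)⁻¹ := by gcongr
    _ = ((1 - x)⁻¹) ^ n := (inv_pow _ _).symm
    _ ≤ Real.exp (2 * x) ^ n := by gcongr
    _ = Real.exp (2 * d) := by rw [← Real.exp_nat_mul, hnx]

/-! ### Moments -/

lemma lpnorm_two {n : ℕ} (x : Fin n → ℝ) : lpnorm 2 x = ‖WithLp.toLp 2 x‖ := by
  rw [EuclideanSpace.norm_eq, lpnorm, if_neg (by simp), Real.sqrt_eq_rpow]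
  simp

/-- The diagonal entries of `A⁻¹`, which are twice the variances of the coordinates under the
density proportional to `exp (-θᵀAθ)`, are bounded by the spectral norm. -/
lemma inv_diag_le {n : ℕ} {A : Matrix (Fin n) (Fin n) ℝ} {b : ℝ} (h : opNorm 2 A⁻¹ ≤ b)
    (j : Fin n) : A⁻¹ j j ≤ b := by
  have hbdd : BddAbove {c : ℝ | ∃ x : Fin n → ℝ, x ≠ 0 ∧
      c = lpnorm 2 (A⁻¹.mulVec x) / lpnorm 2 x} := by
    refine ⟨‖Matrix.toEuclideanCLM (𝕜 := ℝ) A⁻¹‖, ?_⟩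
    rintro _ ⟨x, hx, rfl⟩
    rw [lpnorm_two, lpnorm_two]
    refine div_le_of_le_mul₀ (norm_nonneg _) (norm_nonneg _) ?_
    exact (Matrix.toEuclideanCLM (𝕜 := ℝ) A⁻¹).le_opNorm (WithLp.toLp 2 x)
  have h1 : lpnorm 2 (A⁻¹.mulVec (Pi.single j 1)) / lpnorm 2 (Pi.single j 1 : Fin n → ℝ) ≤ b :=
    (le_csSup hbdd ⟨Pi.single j 1, by simp, rfl⟩).trans h
  have h2 : lpnorm 2 (Pi.single j 1 : Fin n → ℝ) = 1 := by
    rw [lpnorm_two]; simp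
  rw [h2, div_one, lpnorm_two] at h1
  have h3 := PiLp.norm_apply_le (WithLp.toLp 2 (A⁻¹.mulVec (Pi.single j 1))) j
  have h4 : |A⁻¹ j j| ≤ b := by
    refine le_trans ?_ h1
    simpa using h3
  exact (le_abs_self _).trans h4

/-- Completing the square: an exponential tilt in one coordinate is a translation of the
Gaussian weight. -/
lemma exp_mul_gaussWeight {n : ℕ} {A : Matrix (Fin n) (Fin n) ℝ} (hs : A.IsSymm) (hA : A.PosDef)
    {lam : ℝ} (hl : 0 < lam) (t : ℝ) (j : Fin n) (θ : Fin n → ℝ) :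
    Real.exp (t * θ j) * gaussWeight A lam θ =
      Real.exp (t ^ 2 * A⁻¹ j j / (4 * lam)) *
        gaussWeight A lam (θ + (-(t / (2 * lam))) • A⁻¹.mulVec (Pi.single j 1)) := by
  have hdet : IsUnit A.det := hA.det_pos.ne'.isUnit
  have hAu : A.mulVec (A⁻¹.mulVec (Pi.single j 1)) = Pi.single j 1 := by
    rw [mulVec_mulVec, Matrix.mul_nonsing_inv _ hdet, one_mulVec]
  rw [gaussWeight, gaussWeight, ← Real.exp_add, ← Real.exp_add, quadForm_add hs, quadForm_smul,
    mulVec_smul, hAu]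
  have h2 : quadForm A (A⁻¹.mulVec (Pi.single j 1)) = A⁻¹ j j := by
    rw [quadForm, hAu]; simp
  rw [h2]
  congr 1
  simp only [dotProduct_smul, dotProduct_single, smul_eq_mul]
  field_simp
  ring

lemma integrable_exp_mul {n : ℕ} [NeZero n] {A : Matrix (Fin n) (Fin n) ℝ} (hs : A.IsSymm)
    (hA : A.PosDef) {lam : ℝ} (hl : 0 < lam) (t : ℝ) (j : Fin n) :
    Integrable fun θ : Fin n → ℝ => Real.exp (t * θ j) * gaussWeight A lam θ := by
  simp_rw [exp_mul_gaussWeight hs hA hl]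
  exact ((integrable_gaussWeight hA hl).comp_add_right _).const_mul _

lemma integral_exp_mul_le {n : ℕ} {A : Matrix (Fin n) (Fin n) ℝ} (hs : A.IsSymm)
    (hA : A.PosDef) {lam : ℝ} (hl : 1 / 2 ≤ lam) {b : ℝ} (hb : 0 < b) (hbA : opNorm 2 A⁻¹ ≤ b)
    {t : ℝ} (ht : t ^ 2 = 1) (j : Fin n) :
    ∫ θ : Fin n → ℝ, Real.exp (t * θ j) * gaussWeight A lam θ ≤
      Real.exp b * ∫ θ, gaussWeight A lam θ := by
  have hl0 : 0 < lam := by linarith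
  simp_rw [exp_mul_gaussWeight hs hA hl0]
  rw [integral_const_mul, integral_add_right_eq_self (gaussWeight A lam)]
  refine mul_le_mul_of_nonneg_right ?_ (integral_nonneg fun θ => (gaussWeight_pos A lam θ).le)
  rw [Real.exp_le_exp, ht, one_mul, div_le_iff₀ (by positivity)]
  have := inv_diag_le hbA j
  nlinarith

lemma norm_pow_mul_gaussWeight_le {n : ℕ} [NeZero n] (A : Matrix (Fin n) (Fin n) ℝ) (lam : ℝ)
    (p : ℕ) (θ : Fin n → ℝ) :
    ‖θ‖ ^ p * gaussWeight A lam θ ≤ ∑ j, (p.factorial : ℝ) *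
      (Real.exp (1 * θ j) * gaussWeight A lam θ + Real.exp (-1 * θ j) * gaussWeight A lam θ) := by
  obtain ⟨j, hj⟩ : ∃ j, ‖θ‖ = |θ j| := by
    obtain ⟨j, -, hj⟩ := Finset.exists_max_image univ (fun j => |θ j|) Finset.univ_nonempty
    refine ⟨j, le_antisymm ?_ (norm_le_pi_norm θ j)⟩
    exact (pi_norm_le_iff_of_nonneg (abs_nonneg _)).2 fun i => hj i (Finset.mem_univ i)
  have hW := gaussWeight_pos A lam θ
  have h1 : ‖θ‖ ^ p ≤ (p.factorial : ℝ) * (Real.exp (1 * θ j) + Real.exp (-1 * θ j)) := by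
    have h := Real.pow_div_factorial_le_exp |θ j| (abs_nonneg _) p
    rw [div_le_iff₀ (by positivity), mul_comm] at h
    rw [hj]
    refine h.trans (mul_le_mul_of_nonneg_left ?_ (by positivity))
    rcases abs_cases (θ j) with ⟨habs, -⟩ | ⟨habs, -⟩ <;> rw [habs]
    · simp [Real.exp_nonneg]
    · simp [Real.exp_nonneg]
  calc ‖θ‖ ^ p * gaussWeight A lam θ
      ≤ ((p.factorial : ℝ) * (Real.exp (1 * θ j) + Real.exp (-1 * θ j))) * gaussWeight A lam θ := by
        gcongr
    _ = (p.factorial : ℝ) * (Real.exp (1 * θ j) * gaussWeight A lam θ +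
        Real.exp (-1 * θ j) * gaussWeight A lam θ) := by ring
    _ ≤ _ := Finset.single_le_sum (f := fun j => (p.factorial : ℝ) *
        (Real.exp (1 * θ j) * gaussWeight A lam θ + Real.exp (-1 * θ j) * gaussWeight A lam θ))
        (fun i _ => by positivity) (Finset.mem_univ j)

lemma integrable_norm_pow {n : ℕ} [NeZero n] {A : Matrix (Fin n) (Fin n) ℝ} (hs : A.IsSymm)
    (hA : A.PosDef) {lam : ℝ} (hl : 0 < lam) (p : ℕ) :
    Integrable fun θ : Fin n → ℝ => ‖θ‖ ^ p * gaussWeight A lam θ := by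
  refine (integrable_finsetSum univ fun j _ =>
    ((integrable_exp_mul hs hA hl 1 j).add (integrable_exp_mul hs hA hl (-1) j)).const_mul
      (p.factorial : ℝ)).mono' ?_ (Filter.Eventually.of_forall fun θ => ?_)
  · exact ((continuous_norm.pow p).mul (continuous_gaussWeight A lam)).aestronglyMeasurable
  · have hW := gaussWeight_pos A lam θ
    rw [Real.norm_of_nonneg (by positivity)]
    exact norm_pow_mul_gaussWeight_le A lam p θ

/-- The factor `n` comes from bounding the maximum norm by a sum over coordinates. -/
lemma integral_norm_pow_le {n : ℕ} [NeZero n] {A : Matrix (Fin n) (Fin n) ℝ} (hs : A.IsSymm)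
    (hA : A.PosDef) {lam : ℝ} (hl : 1 / 2 ≤ lam) {b : ℝ} (hb : 0 < b) (hbA : opNorm 2 A⁻¹ ≤ b)
    (p : ℕ) :
    ∫ θ : Fin n → ℝ, ‖θ‖ ^ p * gaussWeight A lam θ ≤
      n * ((p.factorial : ℝ) * (2 * Real.exp b)) * ∫ θ, gaussWeight A lam θ := by
  have hl0 : 0 < lam := by linarith
  have hi := fun j => integrable_exp_mul hs hA hl0 1 j
  have hi' := fun j => integrable_exp_mul hs hA hl0 (-1) j
  have hsum : ∀ j, Integrable fun θ : Fin n → ℝ => (p.factorial : ℝ) *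
      (Real.exp (1 * θ j) * gaussWeight A lam θ + Real.exp (-1 * θ j) * gaussWeight A lam θ) :=
    fun j => ((hi j).add (hi' j)).const_mul _
  calc ∫ θ : Fin n → ℝ, ‖θ‖ ^ p * gaussWeight A lam θ
      ≤ ∫ θ : Fin n → ℝ, ∑ j, (p.factorial : ℝ) *
      (Real.exp (1 * θ j) * gaussWeight A lam θ + Real.exp (-1 * θ j) * gaussWeight A lam θ) :=
        integral_mono (integrable_norm_pow hs hA hl0 p)
          (integrable_finsetSum univ fun j _ => hsum j)
          (norm_pow_mul_gaussWeight_le A lam p)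
    _ = ∑ j : Fin n, (p.factorial : ℝ) * ((∫ θ : Fin n → ℝ, Real.exp (1 * θ j) *
          gaussWeight A lam θ) + ∫ θ : Fin n → ℝ, Real.exp (-1 * θ j) * gaussWeight A lam θ) := by
        rw [integral_finsetSum _ fun j _ => hsum j]
        refine Finset.sum_congr rfl fun j _ => ?_
        rw [integral_const_mul, integral_add (hi j) (hi' j)]
    _ ≤ ∑ _j : Fin n, (p.factorial : ℝ) * ((Real.exp b * ∫ θ, gaussWeight A lam θ) +
          Real.exp b * ∫ θ, gaussWeight A lam θ) := by
        refine Finset.sum_le_sum fun j _ => ?_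
        have h1 := integral_exp_mul_le hs hA hl hb hbA (t := 1) (by norm_num) j
        have h2 := integral_exp_mul_le hs hA hl hb hbA (t := -1) (by norm_num) j
        gcongr
    _ = _ := by
        rw [Finset.sum_const, Finset.card_univ, Fintype.card_fin, nsmul_eq_mul]
        ring

/-- Moments of the maximum norm under the flattened weight, together with their tails beyond
radius `r n ^ ε`. A moment of high enough order `m + q` beats both the factor `n` of
`integral_norm_pow_le` and the required `n⁻¹`, since `(n ^ ε) ^ q ≥ n ^ 2`. -/
lemma exists_moment_bound (b ε d r : ℝ) (m : ℕ) (hb : 0 < b) (hε : 0 < ε) (hd : 0 < d)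
    (hr : 0 < r) : ∃ K : ℝ, 0 < K ∧ ∀ (n : ℕ) [NeZero n] (A : Matrix (Fin n) (Fin n) ℝ),
      A.IsSymm → A.PosDef → opNorm 2 A⁻¹ ≤ b → 2 * d ≤ n →
      (∫ θ, ‖θ‖ ^ m * gaussWeight A (1 - d / n) θ ≤
        K * ((n : ℝ) ^ ε) ^ m * ∫ θ, gaussWeight A 1 θ) ∧
      (∫ θ in {θ : Fin n → ℝ | r * (n : ℝ) ^ ε < ‖θ‖}, ‖θ‖ ^ m * gaussWeight A (1 - d / n) θ ≤
        K * (n : ℝ)⁻¹ * ∫ θ, gaussWeight A 1 θ) := by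
  obtain ⟨q, hq⟩ := exists_nat_ge (2 / ε)
  have hq2 : 2 ≤ ε * q := by
    rw [div_le_iff₀ hε] at hq
    linarith
  set C : ℝ := ((m + q).factorial : ℝ) * (2 * Real.exp b) * Real.exp (2 * d) with hC
  have hC0 : 0 < C := by positivity
  refine ⟨Real.exp (2 * d) + C + C / r ^ q, by positivity, ?_⟩
  intro n _ A hs hA hbA hn
  have hn0 : (0 : ℝ) < n := Nat.cast_pos.2 (NeZero.pos n)
  have hn1 : (1 : ℝ) ≤ n := by exact_mod_cast NeZero.one_le
  have hdn : d / n ≤ 1 / 2 := by rw [div_le_iff₀ hn0]; linarith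
  set N : ℝ := (n : ℝ) ^ ε with hN
  have hN1 : 1 ≤ N := Real.one_le_rpow hn1 hε.le
  have hN0 : 0 < N := by linarith
  have hNq : (n : ℝ) ^ 2 ≤ N ^ q := by
    rw [hN, ← Real.rpow_natCast, ← Real.rpow_natCast, ← Real.rpow_mul hn0.le]
    exact Real.rpow_le_rpow_of_exponent_le hn1 (by exact_mod_cast hq2)
  set lam : ℝ := 1 - d / n with hlam
  have hl : 1 / 2 ≤ lam := by linarith
  have hl0 : 0 < lam := by linarith
  set Z : ℝ := ∫ θ, gaussWeight A 1 θ with hZ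
  have hZ0 : 0 ≤ Z := integral_nonneg fun θ => (gaussWeight_pos A 1 θ).le
  have hZ' : ∫ θ, gaussWeight A lam θ ≤ Real.exp (2 * d) * Z := integral_gaussWeight_le hd hn
  have hi := fun p => integrable_norm_pow hs hA hl0 p
  have hM : ∫ θ, ‖θ‖ ^ (m + q) * gaussWeight A lam θ ≤ n * C * Z := by
    refine (integral_norm_pow_le hs hA hl hb hbA (m + q)).trans ?_
    calc _ ≤ n * (((m + q).factorial : ℝ) * (2 * Real.exp b)) * (Real.exp (2 * d) * Z) := by
          gcongr
      _ = _ := by rw [hC]; ring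
  constructor
  · have hpt : ∀ θ : Fin n → ℝ, ‖θ‖ ^ m * gaussWeight A lam θ ≤
        N ^ m * gaussWeight A lam θ + (N ^ q)⁻¹ * (‖θ‖ ^ (m + q) * gaussWeight A lam θ) := by
      intro θ
      have hW := gaussWeight_pos A lam θ
      rcases le_total ‖θ‖ N with h | h
      · have : 0 ≤ (N ^ q)⁻¹ * (‖θ‖ ^ (m + q) * gaussWeight A lam θ) := by positivity
        have : ‖θ‖ ^ m * gaussWeight A lam θ ≤ N ^ m * gaussWeight A lam θ := by gcongr
        linarith
      · have h1 : ‖θ‖ ^ m * gaussWeight A lam θ ≤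
            (N ^ q)⁻¹ * (‖θ‖ ^ (m + q) * gaussWeight A lam θ) := by
          rw [le_inv_mul_iff₀ (by positivity), pow_add]
          have : N ^ q ≤ ‖θ‖ ^ q := by gcongr
          calc N ^ q * (‖θ‖ ^ m * gaussWeight A lam θ)
              ≤ ‖θ‖ ^ q * (‖θ‖ ^ m * gaussWeight A lam θ) := by gcongr
            _ = _ := by ring
        have : 0 ≤ N ^ m * gaussWeight A lam θ := by positivity
        linarith
    have hW := integrable_gaussWeight hA hl0
    calc _ ≤ ∫ θ, (N ^ m * gaussWeight A lam θ +
          (N ^ q)⁻¹ * (‖θ‖ ^ (m + q) * gaussWeight A lam θ)) :=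
          integral_mono (hi m) ((hW.const_mul _).add ((hi (m + q)).const_mul _)) hpt
      _ = N ^ m * (∫ θ, gaussWeight A lam θ) +
          (N ^ q)⁻¹ * ∫ θ, ‖θ‖ ^ (m + q) * gaussWeight A lam θ := by
          rw [integral_add (hW.const_mul _) ((hi (m + q)).const_mul _), integral_const_mul,
            integral_const_mul]
      _ ≤ N ^ m * (Real.exp (2 * d) * Z) + N ^ m * (C * Z) := by
          refine add_le_add (by gcongr) ?_
          rw [inv_mul_le_iff₀ (by positivity)]
          have h1 : (n : ℝ) ≤ N ^ q * N ^ m := by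
            have : (n : ℝ) ≤ n ^ 2 := by nlinarith
            have h2 : 1 ≤ N ^ m := one_le_pow₀ hN1
            nlinarith [pow_pos hN0 q]
          calc _ ≤ n * C * Z := hM
            _ ≤ (N ^ q * N ^ m) * C * Z := by gcongr
            _ = _ := by ring
      _ = (Real.exp (2 * d) + C) * N ^ m * Z := by ring
      _ ≤ _ := by
          have h0 : Real.exp (2 * d) + C ≤ Real.exp (2 * d) + C + C / r ^ q :=
            le_add_of_nonneg_right (by positivity)
          gcongr
  · have hms : MeasurableSet {θ : Fin n → ℝ | r * N < ‖θ‖} :=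
      measurableSet_lt measurable_const measurable_norm
    have hnn : ∀ θ : Fin n → ℝ, 0 ≤ ((r * N) ^ q)⁻¹ * (‖θ‖ ^ (m + q) * gaussWeight A lam θ) := by
      intro θ
      have hW := gaussWeight_pos A lam θ
      positivity
    calc _ ≤ ∫ θ in {θ : Fin n → ℝ | r * N < ‖θ‖},
          ((r * N) ^ q)⁻¹ * (‖θ‖ ^ (m + q) * gaussWeight A lam θ) := by
          refine setIntegral_mono_on (hi m).integrableOn
            ((hi (m + q)).const_mul _).integrableOn hms fun θ hθ => ?_
          have hW := gaussWeight_pos A lam θ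
          have hθ' : r * N ≤ ‖θ‖ := le_of_lt hθ
          rw [le_inv_mul_iff₀ (by positivity), pow_add]
          calc (r * N) ^ q * (‖θ‖ ^ m * gaussWeight A lam θ)
              ≤ ‖θ‖ ^ q * (‖θ‖ ^ m * gaussWeight A lam θ) := by gcongr
            _ = _ := by ring
      _ ≤ ∫ θ, ((r * N) ^ q)⁻¹ * (‖θ‖ ^ (m + q) * gaussWeight A lam θ) :=
          setIntegral_le_integral ((hi (m + q)).const_mul _)
            (Filter.Eventually.of_forall hnn)
      _ = ((r * N) ^ q)⁻¹ * ∫ θ, ‖θ‖ ^ (m + q) * gaussWeight A lam θ := integral_const_mul _ _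
      _ ≤ ((r * N) ^ q)⁻¹ * (n * C * Z) := by gcongr
      _ ≤ C / r ^ q * (n : ℝ)⁻¹ * Z := by
          have h1 : (n : ℝ) * (N ^ q)⁻¹ ≤ (n : ℝ)⁻¹ := by
            rw [← div_eq_mul_inv, div_le_iff₀ (by positivity), le_inv_mul_iff₀ hn0]
            nlinarith
          calc _ = C / r ^ q * (n * (N ^ q)⁻¹) * Z := by rw [mul_pow]; field_simp
            _ ≤ _ := by gcongr
      _ ≤ _ := by
          gcongr
          have : 0 < Real.exp (2 * d) := Real.exp_pos _
          linarith

/-! ### Pointwise bounds on the monomials and their derivatives -/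

lemma abs_mulVec_le {n : ℕ} {a b : ℝ} {A : Matrix (Fin n) (Fin n) ℝ} (ha : 0 < a)
    (h : CondA a b A) (θ : Fin n → ℝ) (j : Fin n) : |A.mulVec θ j| ≤ (1 + a) * ‖θ‖ := by
  obtain ⟨-, -, hdiag, hoff, -⟩ := h
  have hn : (n : ℝ) ≠ 0 := by
    have := j.pos
    positivity
  have hent : ∀ k, |A j k| ≤ (if k = j then 1 else 0) + a / n := by
    intro k
    split_ifs with hk
    · rw [hk, hdiag, abs_one]
      have : 0 ≤ a / n := by positivity
      linarith
    · rw [zero_add]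
      exact hoff j k (Ne.symm hk)
  calc |A.mulVec θ j| = |∑ k, A j k * θ k| := rfl
    _ ≤ ∑ k, |A j k * θ k| := Finset.abs_sum_le_sum_abs _ _
    _ ≤ ∑ k, ((if k = j then 1 else 0) + a / n) * ‖θ‖ := by
        refine Finset.sum_le_sum fun k _ => ?_
        rw [abs_mul]
        exact mul_le_mul (hent k) (norm_le_pi_norm θ k) (abs_nonneg _)
          ((abs_nonneg _).trans (hent k))
    _ = (1 + a) * ‖θ‖ := by
        rw [← Finset.sum_mul, Finset.sum_add_distrib]
        simp
        field_simp
        simp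

lemma quadForm_le {n : ℕ} {a b : ℝ} {A : Matrix (Fin n) (Fin n) ℝ} (ha : 0 < a)
    (h : CondA a b A) (θ : Fin n → ℝ) : quadForm A θ ≤ n * ((1 + a) * ‖θ‖ ^ 2) := by
  calc quadForm A θ = ∑ j, θ j * A.mulVec θ j := rfl
    _ ≤ ∑ _j : Fin n, (1 + a) * ‖θ‖ ^ 2 := by
        refine Finset.sum_le_sum fun j _ => (le_abs_self _).trans ?_
        rw [abs_mul]
        calc |θ j| * |A.mulVec θ j| ≤ ‖θ‖ * ((1 + a) * ‖θ‖) :=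
              mul_le_mul (norm_le_pi_norm θ j) (abs_mulVec_le ha h θ j) (abs_nonneg _)
                (norm_nonneg _)
          _ = _ := by ring
    _ = _ := by simp

/-- The monomial `∏ⱼ φⱼ ^ sⱼ` in the components of `φ = Aθ`. -/
noncomputable def monom {n : ℕ} (A : Matrix (Fin n) (Fin n) ℝ) (sv : Fin n → ℕ)
    (θ : Fin n → ℝ) : ℝ :=
  ∏ j, A.mulVec θ j ^ sv j

/-- The partial derivative `∂ₖ` of `monom A sv`. -/
noncomputable def monomDeriv {n : ℕ} (A : Matrix (Fin n) (Fin n) ℝ) (sv : Fin n → ℕ)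
    (k : Fin n) (θ : Fin n → ℝ) : ℝ :=
  ∑ j, (∏ i ∈ univ.erase j, A.mulVec θ i ^ sv i) * (sv j * A.mulVec θ j ^ (sv j - 1) * A j k)

lemma continuous_monom {n : ℕ} (A : Matrix (Fin n) (Fin n) ℝ) (sv : Fin n → ℕ) :
    Continuous (monom A sv) := by
  unfold monom
  fun_prop

lemma continuous_monomDeriv {n : ℕ} (A : Matrix (Fin n) (Fin n) ℝ) (sv : Fin n → ℕ)
    (k : Fin n) : Continuous (monomDeriv A sv k) := by
  unfold monomDeriv
  fun_prop

lemma abs_monom_le {n : ℕ} {a b : ℝ} {A : Matrix (Fin n) (Fin n) ℝ} (ha : 0 < a)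
    (h : CondA a b A) (sv : Fin n → ℕ) (θ : Fin n → ℝ) :
    |monom A sv θ| ≤ ((1 + a) * ‖θ‖) ^ ∑ j, sv j := by
  rw [monom, Finset.abs_prod, ← Finset.prod_pow_eq_pow_sum]
  refine Finset.prod_le_prod (fun _ _ => abs_nonneg _) fun j _ => ?_
  rw [abs_pow]
  have := abs_mulVec_le ha h θ j
  gcongr

/-- Only off-diagonal entries of `A` enter since `sv k = 0`; this is the source of the
factor `1 / n`. -/
lemma abs_monomDeriv_le {n : ℕ} {a b : ℝ} {A : Matrix (Fin n) (Fin n) ℝ} (ha : 0 < a)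
    (h : CondA a b A) (sv : Fin n → ℕ) {k : Fin n} (hk : sv k = 0) (θ : Fin n → ℝ) :
    |monomDeriv A sv k θ| ≤
      (∑ j, sv j : ℕ) * (a / n) * ((1 + a) * ‖θ‖) ^ (∑ j, sv j - 1) := by
  set T : ℝ := (1 + a) * ‖θ‖ with hT
  have hT0 : 0 ≤ T := by positivity
  have hφ : ∀ j, |A.mulVec θ j| ≤ T := fun j => abs_mulVec_le ha h θ j
  rw [monomDeriv]
  refine (Finset.abs_sum_le_sum_abs _ _).trans ?_
  rw [Nat.cast_sum, Finset.sum_mul, Finset.sum_mul]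
  refine Finset.sum_le_sum fun j _ => ?_
  by_cases hj : sv j = 0
  · simp [hj]
  have hjk : j ≠ k := by
    rintro rfl
    exact hj hk
  have hsum : ∑ i ∈ univ.erase j, sv i + (sv j - 1) = ∑ i, sv i - 1 := by
    have := Finset.sum_erase_add univ sv (Finset.mem_univ j)
    omega
  have hprod : |∏ i ∈ univ.erase j, A.mulVec θ i ^ sv i| ≤ T ^ ∑ i ∈ univ.erase j, sv i := by
    rw [Finset.abs_prod, ← Finset.prod_pow_eq_pow_sum]
    refine Finset.prod_le_prod (fun _ _ => abs_nonneg _) fun i _ => ?_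
    rw [abs_pow]
    have := hφ i
    gcongr
  rw [abs_mul, abs_mul, abs_mul, abs_pow, Nat.abs_cast]
  have h1 := hφ j
  have h2 := h.2.2.2.1 j k hjk
  calc _ ≤ T ^ (∑ i ∈ univ.erase j, sv i) * (sv j * T ^ (sv j - 1) * (a / n)) := by gcongr
    _ = _ := by rw [← hsum, pow_add]; ring

/-! ### Integration by parts -/

lemma hasLineDerivAt_mulVec {n : ℕ} (A : Matrix (Fin n) (Fin n) ℝ) (k j : Fin n)
    (θ : Fin n → ℝ) :
    HasLineDerivAt ℝ (fun θ => A.mulVec θ j) (A j k) θ (Pi.single k 1) := by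
  have : HasDerivAt (fun t : ℝ => A.mulVec θ j + t * A j k) (A j k) 0 := by
    simpa using ((hasDerivAt_id (0 : ℝ)).mul_const (A j k)).const_add (A.mulVec θ j)
  have heq : (fun t : ℝ => A.mulVec (θ + t • Pi.single k 1) j) =
      fun t : ℝ => A.mulVec θ j + t * A j k := by
    funext t
    simp [mulVec_add, mulVec_smul]
  unfold HasLineDerivAt
  rw [heq]
  exact this

lemma hasLineDerivAt_quadForm {n : ℕ} {A : Matrix (Fin n) (Fin n) ℝ} (hs : A.IsSymm) (k : Fin n)
    (θ : Fin n → ℝ) :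
    HasLineDerivAt ℝ (quadForm A) (2 * A.mulVec θ k) θ (Pi.single k 1) := by
  have : HasDerivAt (fun t : ℝ => quadForm A θ + t * (2 * A.mulVec θ k) + t ^ 2 * A k k)
      (2 * A.mulVec θ k) 0 := by
    have h1 := ((hasDerivAt_id (0 : ℝ)).mul_const (2 * A.mulVec θ k)).const_add (quadForm A θ)
    have h2 := (hasDerivAt_pow 2 (0 : ℝ)).mul_const (A k k)
    simpa using h1.fun_add h2
  have heq : (fun t : ℝ => quadForm A (θ + t • Pi.single k 1)) =
      fun t : ℝ => quadForm A θ + t * (2 * A.mulVec θ k) + t ^ 2 * A k k := by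
    funext t
    rw [add_comm θ, quadForm_add hs, quadForm_smul]
    simp [quadForm]
    ring
  unfold HasLineDerivAt
  rw [heq]
  exact this

lemma hasLineDerivAt_monom {n : ℕ} (A : Matrix (Fin n) (Fin n) ℝ) (sv : Fin n → ℕ) (k : Fin n)
    (θ : Fin n → ℝ) :
    HasLineDerivAt ℝ (monom A sv) (monomDeriv A sv k θ) θ (Pi.single k 1) := by
  have h := HasDerivAt.fun_finsetProd (u := univ) (x := (0 : ℝ))
    (f := fun j t => A.mulVec (θ + t • Pi.single k 1) j ^ sv j)
    fun j _ => (hasLineDerivAt_mulVec A k j θ).fun_pow (sv j)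
  unfold HasLineDerivAt
  simpa [monom, monomDeriv] using h

/-- A polynomially bounded observable is integrable against any density dominated by a Gaussian
weight, and its integral is controlled by moments of the maximum norm. -/
lemma integrable_and_bound {n : ℕ} [NeZero n] {A : Matrix (Fin n) (Fin n) ℝ} (hs : A.IsSymm)
    (hA : A.PosDef) {lam : ℝ} (hl : 0 < lam) {g e : (Fin n → ℝ) → ℝ} (hg : Continuous g)
    (hec : Continuous e) (he0 : ∀ θ, 0 ≤ e θ) (he : ∀ θ, e θ ≤ gaussWeight A lam θ) {C D : ℝ}
    {p q : ℕ} (hb : ∀ θ, |g θ| ≤ C * ‖θ‖ ^ p + D * ‖θ‖ ^ q) :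
    (Integrable fun θ => g θ * e θ) ∧
      |∫ θ, g θ * e θ| ≤ C * (∫ θ, ‖θ‖ ^ p * gaussWeight A lam θ) +
        D * ∫ θ, ‖θ‖ ^ q * gaussWeight A lam θ := by
  have hi : Integrable fun θ : Fin n → ℝ => C * (‖θ‖ ^ p * gaussWeight A lam θ) +
      D * (‖θ‖ ^ q * gaussWeight A lam θ) :=
    ((integrable_norm_pow hs hA hl p).const_mul C).add
      ((integrable_norm_pow hs hA hl q).const_mul D)
  have hpt : ∀ θ, ‖g θ * e θ‖ ≤ C * (‖θ‖ ^ p * gaussWeight A lam θ) +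
      D * (‖θ‖ ^ q * gaussWeight A lam θ) := by
    intro θ
    rw [norm_mul, Real.norm_eq_abs, Real.norm_of_nonneg (he0 θ)]
    calc |g θ| * e θ ≤ (C * ‖θ‖ ^ p + D * ‖θ‖ ^ q) * gaussWeight A lam θ :=
          mul_le_mul (hb θ) (he θ) (he0 θ) ((abs_nonneg _).trans (hb θ))
      _ = _ := by ring
  refine ⟨hi.mono' (hg.mul hec).aestronglyMeasurable (Filter.Eventually.of_forall hpt), ?_⟩
  rw [← Real.norm_eq_abs]
  refine (norm_integral_le_of_norm_le hi (Filter.Eventually.of_forall hpt)).trans_eq ?_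
  rw [integral_add ((integrable_norm_pow hs hA hl p).const_mul C)
      ((integrable_norm_pow hs hA hl q).const_mul D), integral_const_mul, integral_const_mul]

/-- The perturbed density `exp F` with `F(θ) = -θᵀAθ + H(θ)`. -/
noncomputable def expF {n : ℕ} (A : Matrix (Fin n) (Fin n) ℝ) (H : (Fin n → ℝ) → ℝ)
    (θ : Fin n → ℝ) : ℝ :=
  Real.exp (-quadForm A θ + H θ)

lemma continuous_expF {n : ℕ} (A : Matrix (Fin n) (Fin n) ℝ) {H : (Fin n → ℝ) → ℝ}
    (hH : Continuous H) : Continuous (expF A H) := by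
  unfold expF
  have := continuous_quadForm A
  fun_prop

lemma expF_le {n : ℕ} {A : Matrix (Fin n) (Fin n) ℝ} {H : (Fin n → ℝ) → ℝ} {c₁ c₂ : ℝ}
    (hH : CondH c₁ c₂ A H) (θ : Fin n → ℝ) : expF A H θ ≤ gaussWeight A (1 - c₁ / n) θ := by
  rw [expF, gaussWeight, Real.exp_le_exp]
  have h := hH.2.1 θ
  have : c₁ * (θ ⬝ᵥ A.mulVec θ) / n = c₁ / n * quadForm A θ := by
    rw [quadForm]; ring
  linarith

lemma hasLineDerivAt_monom_mul_expF {n : ℕ} {A : Matrix (Fin n) (Fin n) ℝ} (hs : A.IsSymm)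
    {H : (Fin n → ℝ) → ℝ} (hH : ContDiff ℝ 1 H) (sv : Fin n → ℕ) (k : Fin n) (θ : Fin n → ℝ) :
    HasLineDerivAt ℝ (fun θ => monom A sv θ * expF A H θ)
      ((monomDeriv A sv k θ + monom A sv θ * fderiv ℝ H θ (Pi.single k 1)) * expF A H θ -
        2 * (A.mulVec θ k * monom A sv θ * expF A H θ)) θ (Pi.single k 1) := by
  have h1 : HasLineDerivAt ℝ H (fderiv ℝ H θ (Pi.single k 1)) θ (Pi.single k 1) :=
    ((hH.differentiable (by norm_num)) θ).hasFDerivAt.hasLineDerivAt _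
  have h2 := hasLineDerivAt_quadForm hs k θ
  have h3 := hasLineDerivAt_monom A sv k θ
  unfold HasLineDerivAt at h1 h2 h3 ⊢
  have h := h3.fun_mul ((h2.fun_neg.fun_add h1).exp)
  refine h.congr_deriv ?_
  simp only [expF, zero_smul, add_zero]
  ring

/-- Integration by parts over all of `ℝⁿ`, where no boundary terms appear:
`2 ⟨φₖ ψ⟩ = ⟨∂ₖψ + ψ ∂ₖH⟩` for the density `exp F`. -/
lemma two_mul_integral_eq {n : ℕ} {A : Matrix (Fin n) (Fin n) ℝ} (hs : A.IsSymm)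
    {H : (Fin n → ℝ) → ℝ} (hH : ContDiff ℝ 1 H) (sv : Fin n → ℕ) (k : Fin n)
    (hi : Integrable fun θ => monom A sv θ * expF A H θ)
    (hiφ : Integrable fun θ => A.mulVec θ k * monom A sv θ * expF A H θ)
    (hiD : Integrable fun θ =>
      (monomDeriv A sv k θ + monom A sv θ * fderiv ℝ H θ (Pi.single k 1)) * expF A H θ) :
    2 * ∫ θ, A.mulVec θ k * monom A sv θ * expF A H θ =
      ∫ θ, (monomDeriv A sv k θ + monom A sv θ * fderiv ℝ H θ (Pi.single k 1)) * expF A H θ := by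
  have hd : Integrable fun θ =>
      (monomDeriv A sv k θ + monom A sv θ * fderiv ℝ H θ (Pi.single k 1)) * expF A H θ -
        2 * (A.mulVec θ k * monom A sv θ * expF A H θ) := hiD.sub (hiφ.const_mul 2)
  -- pairing with the constant function `1`: the integral of a partial derivative vanishes
  have h := integral_bilinear_hasLineDerivAt_right_eq_neg_left_of_integrable
    (μ := (volume : Measure (Fin n → ℝ))) (f := fun _ => (1 : ℝ)) (f' := fun _ => (0 : ℝ))
    (g := fun θ => monom A sv θ * expF A H θ)
    (v := (Pi.single k 1 : Fin n → ℝ)) (B := ContinuousLinearMap.mul ℝ ℝ)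
    (by simp) (by simpa using hd) (by simpa using hi)
    (fun x _ => by simpa [HasLineDerivAt] using hasDerivAt_const (0 : ℝ) (1 : ℝ))
    (fun x _ => hasLineDerivAt_monom_mul_expF hs hH sv k x)
  simp only [ContinuousLinearMap.mul_apply', one_mul, zero_mul, integral_zero, neg_zero] at h
  rw [integral_sub hiD (hiφ.const_mul 2), integral_const_mul] at h
  linarith

lemma abs_phi_mul_monom_le {n : ℕ} {a b : ℝ} {A : Matrix (Fin n) (Fin n) ℝ} (ha : 0 < a)
    (h : CondA a b A) {sv : Fin n → ℕ} {s : ℕ} (hsv : ∑ j, sv j = s) (k : Fin n)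
    (θ : Fin n → ℝ) :
    |A.mulVec θ k * monom A sv θ| ≤ ((1 + a) * ‖θ‖) ^ (s + 1) := by
  have h1 := abs_mulVec_le ha h θ k
  have h2 := abs_monom_le ha h sv θ
  rw [hsv] at h2
  rw [abs_mul, pow_succ']
  gcongr

/-! ### Bounded and unbounded dimension -/

/-- In bounded dimension the crude pointwise bound on `Ω` suffices. -/
lemma small_dim_bound {a b ε r₂ c₁ c₂ d : ℝ} {s : ℕ} (ha : 0 < a) (hε : 0 < ε)
    (hr₂ : 0 < r₂) (hc₁ : 0 < c₁) {n : ℕ} [NeZero n] (hn : (n : ℝ) ≤ d)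
    {A : Matrix (Fin n) (Fin n) ℝ} (hA : CondA a b A) {H : (Fin n → ℝ) → ℝ}
    (hH : CondH c₁ c₂ A H) {Ω : Set (Fin n → ℝ)} (hΩm : MeasurableSet Ω)
    (hΩ : Ω ⊆ Uset n (r₂ * (n : ℝ) ^ ε)) (k : Fin n) {sv : Fin n → ℕ} (hsv : ∑ j, sv j = s) :
    |∫ θ in Ω, A.mulVec θ k * monom A sv θ * expF A H θ| ≤
      ((1 + a) * (r₂ * d ^ ε)) ^ (s + 1) * Real.exp (c₁ * ((1 + a) * (r₂ * d ^ ε) ^ 2)) *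
        ∫ θ, gaussWeight A 1 θ := by
  have hn0 : (0 : ℝ) < n := Nat.cast_pos.2 (NeZero.pos n)
  have hd0 : 0 < d := hn0.trans_le hn
  set ρ : ℝ := r₂ * d ^ ε with hρ
  have hρ0 : 0 < ρ := by positivity
  set C : ℝ := ((1 + a) * ρ) ^ (s + 1) * Real.exp (c₁ * ((1 + a) * ρ ^ 2)) with hC
  have hC0 : 0 < C := by positivity
  have hW := integrable_gaussWeight hA.2.1 one_pos
  have hpt : ∀ θ ∈ Ω, ‖A.mulVec θ k * monom A sv θ * expF A H θ‖ ≤ C * gaussWeight A 1 θ := by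
    intro θ hθ
    have hnorm : ‖θ‖ ≤ ρ := by
      refine (pi_norm_le_iff_of_nonneg hρ0.le).2 fun j => (hΩ hθ j).trans ?_
      exact mul_le_mul_of_nonneg_left (Real.rpow_le_rpow hn0.le hn hε.le) hr₂.le
    have h1 : expF A H θ ≤ Real.exp (c₁ * ((1 + a) * ρ ^ 2)) * gaussWeight A 1 θ := by
      rw [gaussWeight, ← Real.exp_add, expF, Real.exp_le_exp]
      have h2 : H θ ≤ c₁ * ((1 + a) * ρ ^ 2) := by
        refine (hH.2.1 θ).trans ?_
        rw [div_le_iff₀ hn0]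
        calc c₁ * quadForm A θ ≤ c₁ * (n * ((1 + a) * ‖θ‖ ^ 2)) := by
              have := quadForm_le ha hA θ
              gcongr
          _ ≤ c₁ * (n * ((1 + a) * ρ ^ 2)) := by gcongr
          _ = _ := by ring
      linarith
    rw [norm_mul, Real.norm_eq_abs, Real.norm_of_nonneg (show 0 ≤ expF A H θ from Real.exp_nonneg _)]
    calc |A.mulVec θ k * monom A sv θ| * expF A H θ
        ≤ ((1 + a) * ‖θ‖) ^ (s + 1) *
          (Real.exp (c₁ * ((1 + a) * ρ ^ 2)) * gaussWeight A 1 θ) :=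
          mul_le_mul (abs_phi_mul_monom_le ha hA hsv k θ) h1 (Real.exp_nonneg _) (by positivity)
      _ ≤ ((1 + a) * ρ) ^ (s + 1) *
          (Real.exp (c₁ * ((1 + a) * ρ ^ 2)) * gaussWeight A 1 θ) := by
          have := (gaussWeight_pos A 1 θ).le
          gcongr
      _ = _ := by rw [hC]; ring
  rw [← Real.norm_eq_abs]
  calc _ ≤ ∫ θ in Ω, C * gaussWeight A 1 θ :=
        norm_integral_le_of_norm_le (hW.const_mul C).integrableOn
          (ae_restrict_of_forall_mem hΩm hpt)
    _ ≤ ∫ θ, C * gaussWeight A 1 θ :=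
        setIntegral_le_integral (hW.const_mul C)
          (Filter.Eventually.of_forall fun θ => mul_nonneg hC0.le (gaussWeight_pos A 1 θ).le)
    _ = _ := integral_const_mul _ _

/-- In high dimension, integration by parts over `ℝⁿ` gives the main bound, and the part of the
integral outside `Ω` is a negligible tail. -/
lemma exists_large_dim_bound (a b ε r₁ c₁ c₂ : ℝ) (s : ℕ) (ha : 0 < a) (hb : 0 < b) (hε : 0 < ε)
    (hr₁ : 0 < r₁) (hc₁ : 0 < c₁) (hc₂ : 0 < c₂) :
    ∃ C : ℝ, 0 < C ∧ ∀ (n : ℕ) [NeZero n] (A : Matrix (Fin n) (Fin n) ℝ), CondA a b A →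
      2 * c₁ ≤ n → ∀ H : (Fin n → ℝ) → ℝ, CondH c₁ c₂ A H →
      ∀ Ω : Set (Fin n → ℝ), MeasurableSet Ω → Uset n (r₁ * (n : ℝ) ^ ε) ⊆ Ω →
      ∀ (k : Fin n) (sv : Fin n → ℕ), ∑ j, sv j = s → sv k = 0 →
        |∫ θ in Ω, A.mulVec θ k * monom A sv θ * expF A H θ| ≤
          C * (n : ℝ)⁻¹ * ((n : ℝ) ^ ε) ^ (s + 4) * ∫ θ, gaussWeight A 1 θ := by
  obtain ⟨K₁, hK₁, hM₁⟩ := exists_moment_bound b ε c₁ r₁ (s - 1) hb hε hc₁ hr₁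
  obtain ⟨K₂, hK₂, hM₂⟩ := exists_moment_bound b ε c₁ r₁ (s + 3) hb hε hc₁ hr₁
  obtain ⟨K₃, hK₃, hM₃⟩ := exists_moment_bound b ε c₁ r₁ (s + 1) hb hε hc₁ hr₁
  set L : ℝ := 1 + a with hL
  have hL0 : 0 < L := by positivity
  refine ⟨s * a * L ^ (s - 1) * K₁ + c₂ * L ^ s * (K₂ + K₃) + L ^ (s + 1) * K₃,
    by positivity, ?_⟩
  intro n _ A hA hn H hH Ω hΩm hΩ k sv hsv hk
  obtain ⟨hs, hpos, -, -, hbA⟩ := id hA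
  have hn0 : (0 : ℝ) < n := Nat.cast_pos.2 (NeZero.pos n)
  have hn1 : (1 : ℝ) ≤ n := by exact_mod_cast NeZero.one_le
  obtain ⟨hM₁, -⟩ := hM₁ n A hs hpos hbA hn
  obtain ⟨hM₂, -⟩ := hM₂ n A hs hpos hbA hn
  obtain ⟨hM₃, hT⟩ := hM₃ n A hs hpos hbA hn
  have hdn : c₁ / n ≤ 1 / 2 := by rw [div_le_iff₀ hn0]; linarith
  set N : ℝ := (n : ℝ) ^ ε with hN
  have hN1 : 1 ≤ N := Real.one_le_rpow hn1 hε.le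
  set lam : ℝ := 1 - c₁ / n with hlam
  have hl0 : 0 < lam := by linarith
  set Z : ℝ := ∫ θ, gaussWeight A 1 θ with hZ
  have hZ0 : 0 ≤ Z := integral_nonneg fun θ => (gaussWeight_pos A 1 θ).le
  have hHc : Continuous H := hH.1.continuous
  have hec := continuous_expF A hHc
  have he0 : ∀ θ, 0 ≤ expF A H θ := fun θ => Real.exp_nonneg _
  have he : ∀ θ, expF A H θ ≤ gaussWeight A lam θ := expF_le hH
  have hφc : Continuous fun θ => A.mulVec θ k := (continuous_apply k).comp (continuous_mulVec A)
  have hψc := continuous_monom A sv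
  have hdH : Continuous fun θ => fderiv ℝ H θ (Pi.single k 1) :=
    (hH.1.continuous_fderiv (by norm_num)).clm_apply continuous_const
  have hφψc : Continuous fun θ => A.mulVec θ k * monom A sv θ := hφc.mul hψc
  have hψdH : Continuous fun θ => monom A sv θ * fderiv ℝ H θ (Pi.single k 1) := hψc.mul hdH
  have hψb : ∀ θ, |monom A sv θ| ≤ (L * ‖θ‖) ^ s := fun θ => hsv ▸ abs_monom_le ha hA sv θ
  obtain ⟨hi, -⟩ := integrable_and_bound hs hpos hl0 hψc hec he0 he (C := L ^ s) (D := 0)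
    (p := s) (q := 0) fun θ => by simpa [mul_pow] using hψb θ
  obtain ⟨hiφ, -⟩ := integrable_and_bound hs hpos hl0 hφψc hec he0 he
    (C := L ^ (s + 1)) (D := 0) (p := s + 1) (q := 0) fun θ => by
      simpa [mul_pow] using abs_phi_mul_monom_le ha hA hsv k θ
  obtain ⟨hi₁, hb₁⟩ := integrable_and_bound hs hpos hl0 (continuous_monomDeriv A sv k) hec he0 he
    (C := s * (a / n) * L ^ (s - 1)) (D := 0) (p := s - 1) (q := 0) fun θ => by
      have := abs_monomDeriv_le ha hA sv hk θ
      rw [hsv, mul_pow] at this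
      linarith
  obtain ⟨hi₂, hb₂⟩ := integrable_and_bound hs hpos hl0 hψdH hec he0 he
    (C := c₂ / n * L ^ s) (D := c₂ / n * L ^ s) (p := s + 3) (q := s + 1) fun θ => by
      rw [abs_mul]
      calc _ ≤ (L * ‖θ‖) ^ s * (c₂ * (‖θ‖ ^ 3 + ‖θ‖) / n) :=
            mul_le_mul (hψb θ) (hH.2.2 θ k) (abs_nonneg _) (by positivity)
        _ = _ := by ring_nf
  have hsplit : (fun θ => (monomDeriv A sv k θ +
      monom A sv θ * fderiv ℝ H θ (Pi.single k 1)) * expF A H θ) = fun θ =>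
      monomDeriv A sv k θ * expF A H θ +
        monom A sv θ * fderiv ℝ H θ (Pi.single k 1) * expF A H θ := by
    funext θ
    ring
  have hIBP := two_mul_integral_eq hs hH.1 sv k hi hiφ (by rw [hsplit]; exact hi₁.add hi₂)
  rw [hsplit, integral_add hi₁ hi₂] at hIBP
  -- every power of `N = n ^ ε` that occurs is at most `N ^ (s + 4)`
  have hpow : ∀ m ≤ s + 4, N ^ m ≤ N ^ (s + 4) := fun m hm => pow_le_pow_right₀ hN1 hm
  have hbound : ∀ {m : ℕ} {K : ℝ}, 0 < K → m ≤ s + 4 →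
      ∫ θ, ‖θ‖ ^ m * gaussWeight A lam θ ≤ K * N ^ m * Z →
      ∫ θ, ‖θ‖ ^ m * gaussWeight A lam θ ≤ K * N ^ (s + 4) * Z := by
    intro m K hK hm h
    refine h.trans ?_
    have := hpow m hm
    gcongr
  replace hM₁ := hbound hK₁ (by omega) hM₁
  replace hM₂ := hbound hK₂ (by omega) hM₂
  replace hM₃ := hbound hK₃ (by omega) hM₃
  have hJ₁ : |∫ θ, monomDeriv A sv k θ * expF A H θ| ≤
      s * (a / n) * L ^ (s - 1) * (K₁ * N ^ (s + 4) * Z) := by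
    refine hb₁.trans ?_
    rw [zero_mul, add_zero]
    gcongr
  have hJ₂ : |∫ θ, monom A sv θ * fderiv ℝ H θ (Pi.single k 1) * expF A H θ| ≤
      c₂ / n * L ^ s * (K₂ * N ^ (s + 4) * Z) + c₂ / n * L ^ s * (K₃ * N ^ (s + 4) * Z) := by
    refine hb₂.trans ?_
    gcongr
  have hJ : |∫ θ, A.mulVec θ k * monom A sv θ * expF A H θ| ≤
      s * (a / n) * L ^ (s - 1) * (K₁ * N ^ (s + 4) * Z) +
      (c₂ / n * L ^ s * (K₂ * N ^ (s + 4) * Z) + c₂ / n * L ^ s * (K₃ * N ^ (s + 4) * Z)) := by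
    have h1 := abs_add_le (∫ θ, monomDeriv A sv k θ * expF A H θ)
      (∫ θ, monom A sv θ * fderiv ℝ H θ (Pi.single k 1) * expF A H θ)
    rw [← hIBP, abs_mul, abs_two] at h1
    have h2 := abs_nonneg (∫ θ, A.mulVec θ k * monom A sv θ * expF A H θ)
    linarith
  have hsub : Ωᶜ ⊆ {θ : Fin n → ℝ | r₁ * N < ‖θ‖} := by
    intro θ hθ
    by_contra hcon
    refine hθ (hΩ fun j => (norm_le_pi_norm θ j).trans ?_)
    simpa using hcon
  have hi₃ := integrable_norm_pow hs hpos hl0 (s + 1)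
  have htail : |∫ θ in Ωᶜ, A.mulVec θ k * monom A sv θ * expF A H θ| ≤
      L ^ (s + 1) * (K₃ * (n : ℝ)⁻¹ * Z) := by
    rw [← Real.norm_eq_abs]
    calc _ ≤ ∫ θ in Ωᶜ, L ^ (s + 1) * (‖θ‖ ^ (s + 1) * gaussWeight A lam θ) := by
          refine norm_integral_le_of_norm_le (hi₃.const_mul _).integrableOn
            (Filter.Eventually.of_forall fun θ => ?_)
          rw [norm_mul, Real.norm_eq_abs, Real.norm_of_nonneg (he0 θ), ← mul_assoc, ← mul_pow]
          exact mul_le_mul (abs_phi_mul_monom_le ha hA hsv k θ) (he θ) (he0 θ) (by positivity)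
      _ = L ^ (s + 1) * ∫ θ in Ωᶜ, ‖θ‖ ^ (s + 1) * gaussWeight A lam θ :=
          integral_const_mul _ _
      _ ≤ L ^ (s + 1) * ∫ θ in {θ : Fin n → ℝ | r₁ * N < ‖θ‖},
            ‖θ‖ ^ (s + 1) * gaussWeight A lam θ := by
          refine mul_le_mul_of_nonneg_left ?_ (by positivity)
          refine setIntegral_mono_set hi₃.integrableOn
            (Filter.Eventually.of_forall fun θ => ?_) hsub.eventuallyLE
          exact mul_nonneg (by positivity) (gaussWeight_pos A lam θ).le
      _ ≤ _ := by gcongr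
  have hdec : ∫ θ in Ω, A.mulVec θ k * monom A sv θ * expF A H θ =
      (∫ θ, A.mulVec θ k * monom A sv θ * expF A H θ) -
        ∫ θ in Ωᶜ, A.mulVec θ k * monom A sv θ * expF A H θ := by
    rw [← integral_add_compl hΩm hiφ]
    ring
  rw [hdec]
  have hNone : 1 ≤ N ^ (s + 4) := one_le_pow₀ hN1
  calc _ ≤ _ := abs_sub _ _
    _ ≤ (s * (a / n) * L ^ (s - 1) * (K₁ * N ^ (s + 4) * Z) +
      (c₂ / n * L ^ s * (K₂ * N ^ (s + 4) * Z) + c₂ / n * L ^ s * (K₃ * N ^ (s + 4) * Z))) +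
        L ^ (s + 1) * (K₃ * (n : ℝ)⁻¹ * Z) * N ^ (s + 4) := by
        refine add_le_add hJ (htail.trans (le_mul_of_one_le_right (by positivity) hNone))
    _ = _ := by rw [div_eq_mul_inv, div_eq_mul_inv]; ring

/-- Lemma 5.2: moments of monomials in the `φ_j = (Aθ)_j` against `φ_k`. -/
theorem integral_phi_monomial_estimate (a b ε r₁ r₂ c₁ c₂ : ℝ) (s : ℕ) (ha : 0 < a)
    (hb : 0 < b) (hε : 0 < ε) (hr₁ : 0 < r₁) (hr₁₂ : r₁ < r₂) (hc₁ : 0 < c₁) (hc₂ : 0 < c₂)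
    (hs : 0 < s) :
    ∃ c : ℝ, 0 < c ∧
      ∀ (n : ℕ) (A : Matrix (Fin n) (Fin n) ℝ), CondA a b A →
      ∀ H : (Fin n → ℝ) → ℝ, CondH c₁ c₂ A H →
      ∀ Ω : Set (Fin n → ℝ), MeasurableSet Ω →
        Uset n (r₁ * (n : ℝ) ^ (ε : ℝ)) ⊆ Ω → Ω ⊆ Uset n (r₂ * (n : ℝ) ^ (ε : ℝ)) →
        ∀ k : Fin n, ∀ sv : Fin n → ℕ, (∑ j, sv j) = s → sv k = 0 →
          (Finset.univ.filter fun j => sv j ≠ 0).card ≤ 3 →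
        |∫ θ in Ω, A.mulVec θ k * (∏ j, A.mulVec θ j ^ sv j) *
            Real.exp (-(θ ⬝ᵥ A.mulVec θ) + H θ)| ≤
          c * s * (n : ℝ) ^ (-1 + (s + 4) * ε) *
            ∫ θ : Fin n → ℝ, Real.exp (-(θ ⬝ᵥ A.mulVec θ)) := by
  obtain ⟨C₁, hC₁, hlarge⟩ := exists_large_dim_bound a b ε r₁ c₁ c₂ s ha hb hε hr₁ hc₁ hc₂
  have hr₂ : 0 < r₂ := hr₁.trans hr₁₂
  set C₂ : ℝ := ((1 + a) * (r₂ * (2 * c₁) ^ ε)) ^ (s + 1) *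
    Real.exp (c₁ * ((1 + a) * (r₂ * (2 * c₁) ^ ε) ^ 2)) with hC₂
  have hC₂0 : 0 < C₂ := by positivity
  refine ⟨C₁ + C₂ * (2 * c₁), by positivity, ?_⟩
  intro n A hA H hH Ω hΩm hΩ₁ hΩ₂ k sv hsv hk _
  have : NeZero n := ⟨k.pos.ne'⟩
  have hn0 : (0 : ℝ) < n := Nat.cast_pos.2 k.pos
  have hn1 : (1 : ℝ) ≤ n := by exact_mod_cast NeZero.one_le
  have hs1 : (1 : ℝ) ≤ s := by exact_mod_cast hs
  have hZ : ∫ θ : Fin n → ℝ, Real.exp (-(θ ⬝ᵥ A.mulVec θ)) = ∫ θ, gaussWeight A 1 θ := by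
    simp [gaussWeight, quadForm]
  have hexp : (n : ℝ) ^ (-1 + (s + 4) * ε) = (n : ℝ)⁻¹ * ((n : ℝ) ^ ε) ^ (s + 4) := by
    rw [Real.rpow_add hn0, Real.rpow_neg_one, mul_comm ((s : ℝ) + 4) ε, Real.rpow_mul hn0.le]
    norm_cast
  rw [hZ, hexp]
  change |∫ θ in Ω, A.mulVec θ k * monom A sv θ * expF A H θ| ≤ _
  have hZ0 : 0 ≤ ∫ θ, gaussWeight A 1 θ := integral_nonneg fun θ => (gaussWeight_pos A 1 θ).le
  have hN : 1 ≤ ((n : ℝ) ^ ε) ^ (s + 4) := one_le_pow₀ (Real.one_le_rpow hn1 hε.le)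
  -- it suffices to reach `n⁻¹ n ^ ((s + 4) ε)` with either of the two constants
  have key : |∫ θ in Ω, A.mulVec θ k * monom A sv θ * expF A H θ| ≤
      (C₁ + C₂ * (2 * c₁)) * ((n : ℝ)⁻¹ * ((n : ℝ) ^ ε) ^ (s + 4)) *
        ∫ θ, gaussWeight A 1 θ := by
    rcases le_total (2 * c₁) (n : ℝ) with hn | hn
    · refine (hlarge n A hA hn H hH Ω hΩm hΩ₁ k sv hsv hk).trans ?_
      rw [mul_assoc C₁]
      have : C₁ ≤ C₁ + C₂ * (2 * c₁) := le_add_of_nonneg_right (by positivity)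
      gcongr
    · refine (small_dim_bound ha hε hr₂ hc₁ hn hA hH hΩm hΩ₂ k hsv).trans ?_
      rw [← hC₂]
      refine mul_le_mul_of_nonneg_right ?_ hZ0
      have h1 : 1 ≤ 2 * c₁ * ((n : ℝ)⁻¹ * ((n : ℝ) ^ ε) ^ (s + 4)) := by
        have h2 : 1 ≤ 2 * c₁ * (n : ℝ)⁻¹ := by
          rw [← div_eq_mul_inv, one_le_div hn0]
          exact hn
        rw [← mul_assoc]
        exact one_le_mul_of_one_le_of_one_le h2 hN
      have h3 : 0 ≤ C₁ * ((n : ℝ)⁻¹ * ((n : ℝ) ^ ε) ^ (s + 4)) := by positivity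
      nlinarith
  refine key.trans (mul_le_mul_of_nonneg_right ?_ hZ0)
  refine mul_le_mul_of_nonneg_right ?_ (by positivity)
  exact le_mul_of_one_le_right (by positivity) hs1
end
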